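/- For every integer N ≥ 0, every pair of reals 1 < a < b, and every tuple (c_0, …, c_{N−1}) of positive integers, the limit as R → ∞ of μ1{ α ∈ (0,1) irrational : a < q_{n_R(α)}(α)/R < b and a_{n_R(α)−k}(α) = c_k for all 0 ≤ k < N } exists; moreover, there is a probability measure P_N on (1,∞) × ℕ₊^N such that P_N((a,b) × {(c_0,…,c_{N−1})}) equals this limit for all such a, b, c. -/

import Mathlib

open MeasureTheory Filter Set Topology

noncomputable section

/-- The Gauss map `x ↦ {1/x}`. -/
def gaussMap (x : ℝ) : ℝ := Int.fract (1 / x)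

/-- The `n`-th partial quotient (1-indexed) of the continued fraction expansion of `α`:
`pq α n = ⌊1 / 𝒢^{n-1} α⌋`. -/
def pq (α : ℝ) (n : ℕ) : ℕ := ⌊1 / gaussMap^[n - 1] α⌋₊

/-- Denominators of the convergents attached to a (1-indexed) sequence of partial quotients:
`q 0 = 1`, `q 1 = b 1`, `q (n+2) = b (n+2) * q (n+1) + q n`. -/
def qden (b : ℕ → ℕ) : ℕ → ℕ
  | 0 => 1
  | 1 => b 1
  | n + 2 => b (n + 2) * qden b (n + 1) + qden b n

/-- Numerators of the convergents attached to a (1-indexed) sequence of partial quotients: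
`p 0 = 0`, `p 1 = 1`, `p (n+2) = b (n+2) * p (n+1) + p n`. -/
def pnum (b : ℕ → ℕ) : ℕ → ℕ
  | 0 => 0
  | 1 => 1
  | n + 2 => b (n + 2) * pnum b (n + 1) + pnum b n

/-- `n_R(α)`: the first index `n` with `q_n(α) > R`. -/
def nIndex (α : ℝ) (R : ℝ) : ℕ := sInf {n : ℕ | R < (qden (pq α) n : ℝ)}

/-- The Gauss measure on `(0,1)`, with density `1 / (ln 2 · (1 + x))`. -/
def gaussMeasure : Measure ℝ :=
  (volume.restrict (Ioo (0 : ℝ) 1)).withDensity fun x =>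
    ENNReal.ofReal (1 / (Real.log 2 * (1 + x)))

/-- The domain `D = ((0,1) ∖ ℚ) × ((0,1) ∖ ℚ)` of the natural extension of the Gauss map. -/
def Dset : Set (ℝ × ℝ) :=
  {p | p.1 ∈ Ioo (0 : ℝ) 1 ∧ Irrational p.1 ∧ p.2 ∈ Ioo (0 : ℝ) 1 ∧ Irrational p.2}

/-- The invariant measure `μ₂` on `D`, with density `1 / (ln 2 · (1 + x y)²)`. -/
def mu2 : Measure (ℝ × ℝ) :=
  (volume.restrict Dset).withDensity fun p =>
    ENNReal.ofReal (1 / (Real.log 2 * (1 + p.1 * p.2) ^ 2))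

/-- The roof function `φ(x, y) = ln (⌊1/y⌋ + x)`. -/
def roof (p : ℝ × ℝ) : ℝ := Real.log ((⌊1 / p.2⌋ : ℝ) + p.1)

/-- The natural extension of the Gauss map,
`Ĝ(x, y) = (1 / (⌊1/y⌋ + x), 1/y − ⌊1/y⌋)`. -/
def GhatMap (p : ℝ × ℝ) : ℝ × ℝ := (1 / ((⌊1 / p.2⌋ : ℝ) + p.1), Int.fract (1 / p.2))

/-- Birkhoff sums `S_r φ(p) = ∑_{i<r} φ(Ĝ^i p)` of the roof function under `Ĝ`. -/
def birk (p : ℝ × ℝ) (r : ℕ) : ℝ := ∑ i ∈ Finset.range r, roof (GhatMap^[i] p)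

/-- `r(p, T)`: the first `r` with `S_r φ(p) > T`. -/
def rTime (p : ℝ × ℝ) (T : ℝ) : ℕ := sInf {r : ℕ | T < birk p r}

/-- Value of a finite continued fraction `[b₁, b₂, …, bₘ] = 1/(b₁ + 1/(b₂ + ⋯ + 1/bₘ))`,
entries given as a list. -/
def cfList : List ℝ → ℝ
  | [] => 0
  | b :: t => 1 / (b + cfList t)

/-- The `m`-th truncation `[b 1, b 2, …, b m]` of an infinite continued fraction. -/
def cfTrunc (b : ℕ → ℝ) (m : ℕ) : ℝ := cfList ((List.range m).map fun i => b (i + 1))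

/-- Value of the infinite continued fraction `[b 1, b 2, …]`, i.e. the limit of its finite
truncations. -/
def cfVal (b : ℕ → ℝ) : ℝ := limUnder atTop fun m => cfTrunc b m

/-- The finite continued fraction on the reversed word,
`cfRev b k = [b k; b (k-1), …, b 1] = b k + 1/(b (k-1) + ⋯ + 1/(b 1))`. -/
def cfRev (b : ℕ → ℝ) (k : ℕ) : ℝ :=
  b k + cfList ((List.range (k - 1)).map fun i => b (k - 1 - i))

/-- For a bi-infinite sequence `a : ℤ → ℕ` of partial quotients,
`fn a n = ln q_n − ∑_{k=1}^n ln [a_k; a_{k-1}, a_{k-2}, …]`. -/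
def fn (a : ℤ → ℕ) (n : ℕ) : ℝ :=
  Real.log (qden (fun k => a (k : ℤ)) n : ℝ) -
    ∑ k ∈ Finset.Icc 1 n,
      Real.log ((a (k : ℤ) : ℝ) + cfVal fun j => (a ((k : ℤ) - (j : ℤ)) : ℝ))

/-- The bi-sided cylinder of length `n` in `D` prescribing the sequence coordinates
`a_k = b k` for `−n ≤ k ≤ n` (where `a_k`, `k ≥ 1`, are the partial quotients of the second
coordinate and `a_{−j}`, `j ≥ 0`, are the partial quotients of the first coordinate). -/
def cylinder (n : ℕ) (b : ℤ → ℕ) : Set (ℝ × ℝ) :=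
  {p ∈ Dset | (∀ k : ℕ, 1 ≤ k → k ≤ n → pq p.2 k = b (k : ℤ)) ∧
    ∀ j : ℕ, j ≤ n → pq p.1 (j + 1) = b (-(j : ℤ))}

/-- The phase space of the special flow over `Ĝ` with roof function `φ`. -/
def DPhi : Set ((ℝ × ℝ) × ℝ) := {q | q.1 ∈ Dset ∧ 0 ≤ q.2 ∧ q.2 < roof q.1}

/-- The invariant probability measure `μ₃` of the special flow. -/
def mu3 : Measure ((ℝ × ℝ) × ℝ) :=
  (ENNReal.ofReal (∫ p, roof p ∂mu2))⁻¹ • ((mu2.prod volume).restrict DPhi)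

/-- The special flow `Φ_t` (for `t ≥ 0`) built over `Ĝ` with roof function `φ`:
`Φ_t(p, s) = (Ĝ^{r-1} p, s + t − S_{r-1} φ(p))` where `r = r(p, s + t)`. -/
def flowMap (t : ℝ) (q : (ℝ × ℝ) × ℝ) : (ℝ × ℝ) × ℝ :=
  (GhatMap^[rTime q.1 (q.2 + t) - 1] q.1,
    q.2 + t - birk q.1 (rTime q.1 (q.2 + t) - 1))

end

/-!
Let `q` be the first denominator exceeding `R` and `x` the denominator before it. Fixing `(x, q)`
confines `α` to two intervals of length `1 / (q (q + x))`, one at `x⁻¹ / q` and one at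
`1 - x⁻¹ / q`, where `x⁻¹` is the inverse of `x` modulo `q`. So the joint law of
`(y, u) = (q / R, x / q)` under the Gauss measure is a sum over coprime pairs `x ≤ R < q` of
values of the Gauss density at these points.

For fixed `q`, the pairs `(x / q, x⁻¹ / q)` equidistribute in the unit square up to an error `o(q)`:
by Weyl's criterion this asks for `o(q)` bounds on Kloosterman sums, and Kloosterman's own bound
through their fourth moment is enough. Hence the sum over `x` may be replaced by `φ(q) / q ^ 2`
times an integral, and averaging `φ` over `q` shows that `(y, u)` converges in law to the measure
with density `12 / π² · 1 / (y (1 + u))` on `1 < y`, `0 < u < 1 / y`. It has total mass `1`, so no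
mass escapes.

Finally, the continued fraction of `x / q` is that of `α` read backwards from the partial quotient
at `q`, so the required partial quotients are the leading ones of `u`. They are continuous functions
of `u` off the rationals, and convergence in law transfers to them.
-/

/-! ### Residues sharing a large factor with the modulus -/

lemma succ_pow_four_le (e : ℕ) : (e + 1) ^ 4 ≤ 41 * 2 ^ e := by
  rcases lt_or_ge e 7 with small | large
  · interval_cases e <;> norm_num
  · induction e, large using Nat.le_induction with
    | base => norm_num
    | succ k hk ih =>
      have double : (k + 1 + 1) ^ 4 ≤ 2 * (k + 1) ^ 4 := by
        obtain ⟨j, rfl⟩ := Nat.exists_eq_add_of_le' hk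
        ring_nf
        nlinarith [sq_nonneg j, Nat.zero_le (j ^ 3), Nat.zero_le (j ^ 4)]
      calc (k + 1 + 1) ^ 4 ≤ 2 * (41 * 2 ^ k) := double.trans (by gcongr)
        _ = 41 * 2 ^ (k + 1) := by ring

lemma card_divisors_pow_four_le {q : ℕ} (hq : q ≠ 0) :
    q.divisors.card ^ 4 ≤ 41 ^ 16 * q := by
  -- Primes `p ≥ 16` satisfy `(e + 1) ^ 4 ≤ p ^ e`; each smaller one costs a factor `41`.
  have local_bound : ∀ p ∈ q.primeFactors, (q.factorization p + 1) ^ 4 ≤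
      (if p < 16 then 41 else 1) * p ^ q.factorization p := by
    intro p hp
    have two_le := (Nat.prime_of_mem_primeFactors hp).two_le
    split_ifs with h
    · exact (succ_pow_four_le _).trans (by gcongr)
    · calc (q.factorization p + 1) ^ 4 ≤ (2 ^ q.factorization p) ^ 4 := by
            gcongr; exact Nat.lt_two_pow_self
        _ = 16 ^ q.factorization p := by rw [← pow_mul, mul_comm, pow_mul]; norm_num
        _ ≤ 1 * p ^ q.factorization p := by rw [one_mul]; gcongr; omega
  have small_primes : (q.primeFactors.filter (· < 16)).card ≤ 16 :=
    (Finset.card_le_card (t := Finset.range 16) fun x ↦ by simp).trans (by simp)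
  calc q.divisors.card ^ 4 = ∏ p ∈ q.primeFactors, (q.factorization p + 1) ^ 4 := by
        rw [Nat.card_divisors hq, ← Finset.prod_pow]
    _ ≤ ∏ p ∈ q.primeFactors, (if p < 16 then 41 else 1) * p ^ q.factorization p :=
        Finset.prod_le_prod' local_bound
    _ = 41 ^ (q.primeFactors.filter (· < 16)).card * q := by
        rw [Finset.prod_mul_distrib, Finset.prod_ite, Finset.prod_const, Finset.prod_const_one,
          mul_one]
        congr 1
        exact Nat.prod_factorization_pow_eq_self hq
    _ ≤ 41 ^ 16 * q := by gcongr; norm_num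

/-- The residues `s` modulo `q` with `gcd (q, s) ≥ q ^ (1 / 3)`. If a product of three residues
vanishes, then one of the factors is such a residue. -/
def largeGcd (q : ℕ) [NeZero q] : Finset (ZMod q) :=
  {s | q ≤ Nat.gcd q s.val ^ 3}

section LargeGcd

variable (q : ℕ) [NeZero q]

lemma card_largeGcd_le_sum :
    (largeGcd q).card ≤ ∑ d ∈ q.divisors with q ≤ d ^ 3, q / d := by
  have hq : 0 < q := NeZero.pos q
  have cover : (largeGcd q).image ZMod.val ⊆ (q.divisors.filter (q ≤ · ^ 3)).biUnion
      fun d ↦ (Finset.range (q / d)).image (d * ·) := by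
    intro s hs
    obtain ⟨r, hr, rfl⟩ := Finset.mem_image.mp hs
    rw [largeGcd, Finset.mem_filter_univ] at hr
    simp only [Finset.mem_biUnion, Finset.mem_filter, Nat.mem_divisors, Finset.mem_image,
      Finset.mem_range]
    exact ⟨q.gcd r.val, ⟨⟨Nat.gcd_dvd_left _ _, hq.ne'⟩, hr⟩, r.val / q.gcd r.val,
      Nat.div_lt_div_of_lt_of_dvd (Nat.gcd_dvd_left _ _) r.val_lt,
      Nat.mul_div_cancel' (Nat.gcd_dvd_right _ _)⟩
  calc (largeGcd q).card = ((largeGcd q).image ZMod.val).card :=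
        (Finset.card_image_of_injective _ (ZMod.val_injective q)).symm
    _ ≤ _ := (Finset.card_le_card cover).trans Finset.card_biUnion_le
    _ ≤ _ := Finset.sum_le_sum fun d _ ↦ Finset.card_image_le.trans (by simp)

lemma card_largeGcd_pow_three_le :
    (largeGcd q).card ^ 3 ≤ q.divisors.card ^ 3 * q ^ 2 := by
  have codivisor_le : ∀ d ∈ q.divisors.filter (q ≤ · ^ 3), (q / d) ^ 3 ≤ q ^ 2 := by
    intro d hd
    obtain ⟨hdvd, hle⟩ := Finset.mem_filter.mp hd
    obtain ⟨k, hk⟩ := Nat.dvd_of_mem_divisors hdvd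
    have hd0 : 0 < d := Nat.pos_of_mem_divisors hdvd
    have hkd : k ≤ d ^ 2 := Nat.le_of_mul_le_mul_left (by linarith [pow_succ' d 2]) hd0
    rw [show q / d = k by rw [hk, Nat.mul_div_cancel_left _ hd0]]
    calc k ^ 3 = k ^ 2 * k := by ring
      _ ≤ k ^ 2 * d ^ 2 := by gcongr
      _ = q ^ 2 := by rw [hk]; ring
  obtain ⟨m, hm, sum_le⟩ : ∃ m, m ^ 3 ≤ q ^ 2 ∧
      ∑ d ∈ q.divisors with q ≤ d ^ 3, q / d ≤ (q.divisors.filter (q ≤ · ^ 3)).card * m := by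
    rcases (q.divisors.filter (q ≤ · ^ 3)).eq_empty_or_nonempty with h | h
    · exact ⟨0, by simp, by simp [h]⟩
    · obtain ⟨e, he, max⟩ := Finset.exists_max_image _ (fun d ↦ q / d) h
      exact ⟨q / e, codivisor_le e he, Finset.sum_le_card_nsmul _ _ _ max⟩
  calc (largeGcd q).card ^ 3 ≤ (q.divisors.card * m) ^ 3 := by
        refine Nat.pow_le_pow_left ((card_largeGcd_le_sum q).trans (sum_le.trans ?_)) 3
        gcongr
        exact Finset.filter_subset ..
    _ = q.divisors.card ^ 3 * m ^ 3 := mul_pow ..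
    _ ≤ q.divisors.card ^ 3 * q ^ 2 := by gcongr

lemma card_largeGcd_pow_le : (largeGcd q).card ^ 12 ≤ 41 ^ 48 * q ^ 11 :=
  calc (largeGcd q).card ^ 12 = ((largeGcd q).card ^ 3) ^ 4 := by ring
    _ ≤ (q.divisors.card ^ 3 * q ^ 2) ^ 4 := by gcongr; exact card_largeGcd_pow_three_le q
    _ = (q.divisors.card ^ 4) ^ 3 * q ^ 8 := by ring
    _ ≤ (41 ^ 16 * q) ^ 3 * q ^ 8 := by gcongr; exact card_divisors_pow_four_le (NeZero.ne q)
    _ = 41 ^ 48 * q ^ 11 := by ring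

variable {q}

lemma mem_largeGcd_of_mul_mul_eq_zero {u v w : ZMod q} (h : u * v * w = 0) :
    u ∈ largeGcd q ∨ v ∈ largeGcd q ∨ w ∈ largeGcd q := by
  have dvd_prod : q ∣ u.val * v.val * w.val := by
    rw [← ZMod.natCast_eq_zero_iff]
    simpa using h
  have dvd_gcds : q ∣ q.gcd u.val * q.gcd v.val * q.gcd w.val := by
    have split_last := Nat.gcd_mul_right_dvd_mul_gcd q (u.val * v.val) w.val
    rw [Nat.gcd_eq_left dvd_prod] at split_last
    exact split_last.trans (Nat.mul_dvd_mul_right (Nat.gcd_mul_right_dvd_mul_gcd q _ _) _)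
  have gcd_pos (s : ZMod q) : 0 < q.gcd s.val := Nat.gcd_pos_of_pos_left _ (NeZero.pos q)
  have le_gcds := Nat.le_of_dvd
    (mul_pos (mul_pos (gcd_pos u) (gcd_pos v)) (gcd_pos w)) dvd_gcds
  simp only [largeGcd, Finset.mem_filter_univ]
  by_contra! small
  have : (q.gcd u.val * q.gcd v.val * q.gcd w.val) ^ 3 < q ^ 3 :=
    calc (q.gcd u.val * q.gcd v.val * q.gcd w.val) ^ 3
        = q.gcd u.val ^ 3 * q.gcd v.val ^ 3 * q.gcd w.val ^ 3 := by ring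
      _ < q * q * q := Nat.mul_lt_mul'' (Nat.mul_lt_mul'' small.1 small.2.1) small.2.2
      _ = q ^ 3 := by ring
  exact (lt_of_pow_lt_pow_left₀ 3 (Nat.zero_le _) this).not_ge le_gcds

end LargeGcd

/-! ### The fourth moment of Kloosterman sums -/

section Kloosterman

variable {q : ℕ} [NeZero q]

/-- The Kloosterman sum `K(h, k; q) = ∑ e((h x + k x⁻¹) / q)` over the units `x` modulo `q`. -/
noncomputable def kloostermanSum (h k : ZMod q) : ℂ :=
  ∑ x : (ZMod q)ˣ, ZMod.stdAddChar (h * (x : ZMod q) + k * (↑x⁻¹ : ZMod q))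

lemma kloostermanSum_mul_unit (h k : ZMod q) (t : (ZMod q)ˣ) :
    kloostermanSum (h * (t : ZMod q)) (k * (↑t⁻¹ : ZMod q)) = kloostermanSum h k := by
  unfold kloostermanSum
  refine Fintype.sum_equiv (Equiv.mulLeft t) _ _ fun x ↦ ?_
  simp only [Equiv.coe_mulLeft, mul_inv, Units.val_mul, mul_assoc]

lemma sum_norm_sum_stdAddChar_sq {ι : Type*} [Fintype ι] (u v : ι → ZMod q) :
    ∑ h : ZMod q, ∑ k : ZMod q, ‖∑ i, ZMod.stdAddChar (h * u i + k * v i)‖ ^ 2 =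
      (q : ℝ) ^ 2 * (Finset.univ.filter fun p : ι × ι ↦ u p.1 = u p.2 ∧ v p.1 = v p.2).card := by
  have normSq_eq (h k : ZMod q) :
      ((‖∑ i, ZMod.stdAddChar (h * u i + k * v i)‖ ^ 2 : ℝ) : ℂ) = ∑ p : ι × ι,
        ZMod.stdAddChar (h * (u p.1 - u p.2)) * ZMod.stdAddChar (k * (v p.1 - v p.2)) := by
    rw [Complex.ofReal_pow, ← Complex.mul_conj', map_sum, Fintype.sum_mul_sum,
      Fintype.sum_prod_type]
    refine Finset.sum_congr rfl fun i _ ↦ Finset.sum_congr rfl fun j _ ↦ ?_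
    rw [← AddChar.map_neg_eq_conj, ← AddChar.map_add_eq_mul, ← AddChar.map_add_eq_mul]
    congr 1
    ring
  have orthogonality (a b : ZMod q) :
      ∑ h, ∑ k, ZMod.stdAddChar (h * a) * ZMod.stdAddChar (k * b) =
        if a = 0 ∧ b = 0 then (q : ℂ) ^ 2 else 0 := by
    rw [← Fintype.sum_mul_sum, AddChar.sum_mulShift _ (ZMod.isPrimitive_stdAddChar q),
      AddChar.sum_mulShift _ (ZMod.isPrimitive_stdAddChar q), ZMod.card]
    split_ifs <;> simp_all [sq]
  rw [← Complex.ofReal_inj, Complex.ofReal_sum]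
  simp_rw [Complex.ofReal_sum, normSq_eq]
  rw [Finset.sum_congr rfl fun h _ ↦ Finset.sum_comm, Finset.sum_comm]
  simp only [orthogonality, sub_eq_zero]
  rw [← Finset.sum_filter, Finset.sum_const]
  simp [mul_comm]

variable (q) in
/-- The quadruples `((x, y), (z, w))` of units modulo `q` with `x + y = z + w` and
`x⁻¹ + y⁻¹ = z⁻¹ + w⁻¹`; they are counted by the fourth moment of the Kloosterman sums. -/
def inverseEnergy : Finset (((ZMod q)ˣ × (ZMod q)ˣ) × (ZMod q)ˣ × (ZMod q)ˣ) :=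
  {p | (p.1.1 : ZMod q) + p.1.2 = p.2.1 + p.2.2 ∧
    (↑p.1.1⁻¹ : ZMod q) + ↑p.1.2⁻¹ = ↑p.2.1⁻¹ + ↑p.2.2⁻¹}

lemma sum_norm_kloostermanSum_pow_four :
    ∑ h : ZMod q, ∑ k : ZMod q, ‖kloostermanSum h k‖ ^ 4 =
      (q : ℝ) ^ 2 * (inverseEnergy q).card := by
  rw [inverseEnergy, ← sum_norm_sum_stdAddChar_sq
    (fun p : (ZMod q)ˣ × (ZMod q)ˣ ↦ (p.1 : ZMod q) + (p.2 : ZMod q))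
    (fun p ↦ (↑p.1⁻¹ : ZMod q) + (↑p.2⁻¹ : ZMod q))]
  refine Finset.sum_congr rfl fun h _ ↦ Finset.sum_congr rfl fun k _ ↦ ?_
  rw [show 4 = 2 * 2 from rfl, pow_mul, ← norm_pow, sq (kloostermanSum h k), kloostermanSum,
    Fintype.sum_mul_sum, Fintype.sum_prod_type]
  congr 2
  refine Finset.sum_congr rfl fun x _ ↦ Finset.sum_congr rfl fun y _ ↦ ?_
  rw [← AddChar.map_add_eq_mul]
  congr 1
  ring

lemma mul_mul_eq_zero_of_mem_inverseEnergy {x y z w : (ZMod q)ˣ}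
    (h : ((x, y), (z, w)) ∈ inverseEnergy q) :
    ((x : ZMod q) + y) * (z - x) * (y - z) = 0 := by
  rw [inverseEnergy, Finset.mem_filter_univ] at h
  obtain ⟨add_eq, inv_add_eq⟩ := h
  have cleared : ((x : ZMod q) + y) * (z * w) = (z + w) * (x * y) :=
    calc ((x : ZMod q) + y) * (z * w)
        = (↑x⁻¹ + ↑y⁻¹) * (x * y * z * w) := by
          linear_combination (-y * z * w : ZMod q) * x.inv_mul - (x * z * w) * y.inv_mul
      _ = (↑z⁻¹ + ↑w⁻¹) * (x * y * z * w) := by rw [inv_add_eq]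
      _ = (z + w) * (x * y) := by
          linear_combination (x * y * w : ZMod q) * z.inv_mul + (x * y * z) * w.inv_mul
  linear_combination cleared + ((x + y) * z - x * y : ZMod q) * add_eq

lemma card_inverseEnergy_le :
    (inverseEnergy q).card ≤ q.totient * (3 * (q * (largeGcd q).card)) := by
  classical
  -- The triple `(x, y, z)` determines `w`, and one of `x + y`, `z - x`, `y - z` has a large gcd.
  let pairs : Finset (ZMod q × ZMod q) := Finset.univ ×ˢ largeGcd q
  let triples (x : (ZMod q)ˣ) : Finset ((ZMod q)ˣ × ZMod q × ZMod q) :=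
    pairs.image (fun p ↦ (x, p.2 - x, p.1)) ∪ pairs.image (fun p ↦ (x, p.1, p.2 + x)) ∪
      pairs.image (fun p ↦ (x, p.2 + p.1, p.1))
  have card_triples (x : (ZMod q)ˣ) : (triples x).card ≤ 3 * (q * (largeGcd q).card) := by
    have card_pairs : pairs.card = q * (largeGcd q).card := by
      rw [Finset.card_product, Finset.card_univ, ZMod.card]
    calc (triples x).card ≤ pairs.card + pairs.card + pairs.card := by
          refine (Finset.card_union_le ..).trans (Nat.add_le_add ?_ Finset.card_image_le)
          exact (Finset.card_union_le ..).trans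
            (Nat.add_le_add Finset.card_image_le Finset.card_image_le)
      _ = 3 * (q * (largeGcd q).card) := by rw [card_pairs]; ring
  have maps_to : ∀ p ∈ inverseEnergy q,
      (p.1.1, (p.1.2 : ZMod q), (p.2.1 : ZMod q)) ∈ Finset.univ.biUnion triples := by
    rintro ⟨⟨x, y⟩, z, w⟩ hp
    simp only [Finset.mem_biUnion, Finset.mem_univ, true_and, triples, pairs, Finset.mem_union,
      Finset.mem_image, Finset.mem_product]
    refine ⟨x, ?_⟩
    rcases mem_largeGcd_of_mul_mul_eq_zero (mul_mul_eq_zero_of_mem_inverseEnergy hp) with h | h | h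
    · exact Or.inl (Or.inl ⟨(z, x + y), h, by simp⟩)
    · exact Or.inl (Or.inr ⟨(y, z - x), h, by simp⟩)
    · exact Or.inr ⟨(z, y - z), h, by simp⟩
  have inj_on : Set.InjOn (fun p : ((ZMod q)ˣ × (ZMod q)ˣ) × (ZMod q)ˣ × (ZMod q)ˣ ↦
      (p.1.1, (p.1.2 : ZMod q), (p.2.1 : ZMod q))) (inverseEnergy q) := by
    rintro ⟨⟨x, y⟩, z, w⟩ hp ⟨⟨x', y'⟩, z', w'⟩ hp' heq
    simp only [Prod.mk.injEq, Units.val_inj] at heq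
    obtain ⟨rfl, rfl, rfl⟩ := heq
    simp only [inverseEnergy, Finset.coe_filter, Finset.mem_univ, true_and,
      Set.mem_ofPred_eq] at hp hp'
    simp only [Prod.mk.injEq, true_and]
    exact Units.ext (add_left_cancel (hp.1.symm.trans hp'.1))
  calc (inverseEnergy q).card ≤ (Finset.univ.biUnion triples).card :=
        Finset.card_le_card_of_injOn _ maps_to inj_on
    _ ≤ ∑ _x : (ZMod q)ˣ, 3 * (q * (largeGcd q).card) :=
        Finset.card_biUnion_le.trans (Finset.sum_le_sum fun x _ ↦ card_triples x)
    _ = q.totient * (3 * (q * (largeGcd q).card)) := by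
        rw [Finset.sum_const, smul_eq_mul, Finset.card_univ, ZMod.card_units_eq_totient]

lemma card_intCast_mul_eq_le {h : ℤ} (hh : h ≠ 0) (c : ZMod q) :
    (Finset.univ.filter fun t : ZMod q ↦ (h : ZMod q) * t = c).card ≤ h.natAbs := by
  rcases (Finset.univ.filter fun t : ZMod q ↦ (h : ZMod q) * t = c).eq_empty_or_nonempty
    with empty | ⟨s, hs⟩
  · simp [empty]
  · refine le_trans ?_
      (IsAddCyclic.card_nsmul_eq_zero_le (α := ZMod q) (Int.natAbs_pos.mpr hh))
    refine Finset.card_le_card_of_injOn (fun t ↦ t - s) (fun t ht ↦ ?_) sub_left_injective.injOn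
    rw [Finset.mem_filter_univ] at hs
    simp only [Finset.mem_coe, Finset.mem_filter_univ] at ht ⊢
    have zero : (h : ZMod q) * (t - s) = 0 := by rw [mul_sub, ht, hs, sub_self]
    rw [nsmul_eq_mul]
    rcases Int.natAbs_eq h with e | e <;> rw [e] at zero <;> simpa using zero

lemma norm_kloostermanSum_pow_four_le {h k : ℤ} (hhk : h ≠ 0 ∨ k ≠ 0) :
    ‖kloostermanSum (h : ZMod q) k‖ ^ 4 ≤
      (h.natAbs + k.natAbs : ℝ) * (3 * (q : ℝ) ^ 3 * (largeGcd q).card) := by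
  -- Average over the frequencies `(h t, k t⁻¹)`, which all give the same sum.
  let freq (t : (ZMod q)ˣ) : ZMod q × ZMod q := (h * t, k * (↑t⁻¹ : ZMod q))
  have card_fiber (p : ZMod q × ZMod q) :
      (Finset.univ.filter (freq · = p)).card ≤ h.natAbs + k.natAbs := by
    rcases hhk with hh | hk
    · refine le_trans ?_ ((card_intCast_mul_eq_le hh p.1).trans (Nat.le_add_right _ _))
      refine Finset.card_le_card_of_injOn (fun t ↦ (t : ZMod q)) (fun t ht ↦ ?_)
        Units.val_injective.injOn
      simp only [Finset.mem_coe, Finset.mem_filter_univ] at ht ⊢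
      rw [← ht]
    · refine le_trans ?_ ((card_intCast_mul_eq_le hk p.2).trans (Nat.le_add_left _ _))
      refine Finset.card_le_card_of_injOn (fun t ↦ (↑t⁻¹ : ZMod q)) (fun t ht ↦ ?_)
        (Units.val_injective.comp inv_injective).injOn
      simp only [Finset.mem_coe, Finset.mem_filter_univ] at ht ⊢
      rw [← ht]
  have sum_freq_le : ∑ t, ‖kloostermanSum (freq t).1 (freq t).2‖ ^ 4 ≤
      (h.natAbs + k.natAbs : ℝ) * ∑ p : ZMod q × ZMod q, ‖kloostermanSum p.1 p.2‖ ^ 4 := by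
    rw [← Finset.sum_fiberwise (s := Finset.univ) (g := freq), Finset.mul_sum]
    refine Finset.sum_le_sum fun p _ ↦ ?_
    rw [Finset.sum_congr rfl (g := fun _ ↦ ‖kloostermanSum p.1 p.2‖ ^ 4)
      fun t ht ↦ by rw [(Finset.mem_filter.mp ht).2], Finset.sum_const, nsmul_eq_mul]
    gcongr
    exact_mod_cast card_fiber p
  have totient_pos : 0 < (q.totient : ℝ) := by exact_mod_cast Nat.totient_pos.mpr (NeZero.pos q)
  refine le_of_mul_le_mul_left ?_ totient_pos
  calc (q.totient : ℝ) * ‖kloostermanSum (h : ZMod q) k‖ ^ 4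
      = ∑ t, ‖kloostermanSum (freq t).1 (freq t).2‖ ^ 4 := by
        simp only [freq, kloostermanSum_mul_unit]
        rw [Finset.sum_const, Finset.card_univ, ZMod.card_units_eq_totient, nsmul_eq_mul]
    _ ≤ (h.natAbs + k.natAbs : ℝ) * ((q : ℝ) ^ 2 * (inverseEnergy q).card) := by
        rwa [← sum_norm_kloostermanSum_pow_four, ← Fintype.sum_prod_type']
    _ ≤ (h.natAbs + k.natAbs : ℝ) *
          ((q : ℝ) ^ 2 * (q.totient * (3 * (q * (largeGcd q).card)))) := by
        gcongr
        exact_mod_cast card_inverseEnergy_le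
    _ = _ := by ring

lemma norm_kloostermanSum_div_pow_le {h k : ℤ} (hhk : h ≠ 0 ∨ k ≠ 0) :
    (‖kloostermanSum (h : ZMod q) k‖ / q) ^ 48 ≤
      (3 * (h.natAbs + k.natAbs : ℝ)) ^ 12 * 41 ^ 48 / q := by
  have hq : (0 : ℝ) < q := by exact_mod_cast NeZero.pos q
  have card_le : ((largeGcd q).card : ℝ) ^ 12 ≤ 41 ^ 48 * (q : ℝ) ^ 11 := by
    exact_mod_cast card_largeGcd_pow_le q
  rw [div_pow, div_le_div_iff₀ (by positivity) hq]
  calc ‖kloostermanSum (h : ZMod q) k‖ ^ 48 * q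
      = (‖kloostermanSum (h : ZMod q) k‖ ^ 4) ^ 12 * q := by ring
    _ ≤ ((h.natAbs + k.natAbs : ℝ) * (3 * (q : ℝ) ^ 3 * (largeGcd q).card)) ^ 12 * q := by
        gcongr
        exact norm_kloostermanSum_pow_four_le hhk
    _ = (3 * (h.natAbs + k.natAbs : ℝ)) ^ 12 * q ^ 37 * ((largeGcd q).card : ℝ) ^ 12 := by ring
    _ ≤ (3 * (h.natAbs + k.natAbs : ℝ)) ^ 12 * q ^ 37 * (41 ^ 48 * (q : ℝ) ^ 11) := by gcongr
    _ = (3 * (h.natAbs + k.natAbs : ℝ)) ^ 12 * 41 ^ 48 * q ^ 48 := by ring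

end Kloosterman

lemma tendsto_norm_kloostermanSum_div {h k : ℤ} (hhk : h ≠ 0 ∨ k ≠ 0) :
    Tendsto (fun n : ℕ ↦ ‖kloostermanSum (h : ZMod (n + 1)) k‖ / (n + 1)) atTop (𝓝 0) := by
  have pow_tendsto : Tendsto
      (fun n : ℕ ↦ (‖kloostermanSum (h : ZMod (n + 1)) k‖ / (n + 1)) ^ 48) atTop (𝓝 0) := by
    refine squeeze_zero (fun n ↦ by positivity)
      (fun n ↦ by simpa using norm_kloostermanSum_div_pow_le (q := n + 1) hhk)
      (tendsto_const_nhds.div_atTop ?_)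
    exact tendsto_natCast_atTop_atTop.atTop_add tendsto_const_nhds
  have root_tendsto := pow_tendsto.rpow_const (p := ((48 : ℕ) : ℝ)⁻¹) (Or.inr (by norm_num))
  rw [Real.zero_rpow (by norm_num)] at root_tendsto
  exact root_tendsto.congr fun n ↦ Real.pow_rpow_inv_natCast (by positivity) (by norm_num)

/-! ### Equidistribution of modular inverses -/

lemma tendsto_zero_of_dense_span {ι E : Type*} [NormedAddCommGroup E] [NormedSpace ℂ E]
    {l : Filter ι} {T : ι → E →ₗ[ℂ] ℂ} {C : ℝ} (bound : ∀ i f, ‖T i f‖ ≤ C * ‖f‖) {S : Set E}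
    (dense : (Submodule.span ℂ S).topologicalClosure = ⊤)
    (tendsto_of_mem : ∀ f ∈ S, Tendsto (fun i ↦ T i f) l (𝓝 0)) (f : E) :
    Tendsto (fun i ↦ T i f) l (𝓝 0) := by
  have tendsto_span : ∀ g ∈ Submodule.span ℂ S, Tendsto (fun i ↦ T i g) l (𝓝 0) := by
    intro g hg
    induction hg using Submodule.span_induction with
    | mem g hg => exact tendsto_of_mem g hg
    | zero => simpa using tendsto_const_nhds
    | add g₁ g₂ _ _ h₁ h₂ => simpa using h₁.add h₂
    | smul c g _ h => simpa using h.const_mul c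
  rw [Metric.tendsto_nhds]
  intro ε hε
  obtain ⟨g, hg, hfg⟩ : ∃ g ∈ Submodule.span ℂ S, dist f g < ε / (2 * (|C| + 1)) := by
    refine Metric.mem_closure_iff.mp ?_ _ (by positivity)
    rw [← Submodule.topologicalClosure_coe, dense]
    trivial
  filter_upwards [Metric.tendsto_nhds.mp (tendsto_span g hg) (ε / 2) (by positivity)] with i hi
  rw [dist_zero_right] at hi ⊢
  have close : ‖T i (f - g)‖ ≤ ε / 2 :=
    calc ‖T i (f - g)‖ ≤ C * ‖f - g‖ := bound i _
      _ ≤ (|C| + 1) * (ε / (2 * (|C| + 1))) := by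
          gcongr
          · exact (le_abs_self C).trans (by linarith)
          · exact (dist_eq_norm f g ▸ hfg).le
      _ = ε / 2 := by field_simp
  calc ‖T i f‖ = ‖T i (f - g) + T i g‖ := by rw [← map_add, sub_add_cancel]
    _ ≤ ‖T i (f - g)‖ + ‖T i g‖ := norm_add_le _ _
    _ < ε := by linarith

lemma integrable_circle (f : C(UnitAddCircle, ℂ)) : Integrable f :=
  f.continuous.integrable_of_hasCompactSupport (.of_compactSpace f)

lemma norm_integral_circle_le (f : C(UnitAddCircle, ℂ)) : ‖∫ t, f t‖ ≤ ‖f‖ := by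
  have := norm_integral_le_of_norm_le_const (μ := (volume : Measure UnitAddCircle))
    (ae_of_all _ f.norm_coe_le_norm)
  simpa [Measure.real, UnitAddCircle.measure_univ] using this

section Discrepancy

variable (q : ℕ) [NeZero q]

/-- The discrepancy `(∑ f(x / q) H(x⁻¹ / q) - φ(q) ∫ f ∫ H) / q`, the sum being over the units `x`
modulo `q`, as a bilinear form in the test functions `f` and `H` on the circle. -/
noncomputable def inverseDiscrepancy :
    C(UnitAddCircle, ℂ) →ₗ[ℂ] C(UnitAddCircle, ℂ) →ₗ[ℂ] ℂ :=
  LinearMap.mk₂ ℂ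
    (fun f H ↦ (∑ x : (ZMod q)ˣ, f (ZMod.toAddCircle (x : ZMod q)) *
      H (ZMod.toAddCircle (↑x⁻¹ : ZMod q)) - q.totient * ((∫ t, f t) * ∫ t, H t)) / q)
    (fun f₁ f₂ H ↦ by
      simp only [ContinuousMap.add_apply, add_mul, Finset.sum_add_distrib]
      rw [integral_add (integrable_circle f₁) (integrable_circle f₂)]
      ring)
    (fun c f H ↦ by
      simp only [ContinuousMap.smul_apply, smul_eq_mul, mul_assoc, ← Finset.mul_sum,
        integral_const_mul]
      ring)
    (fun f H₁ H₂ ↦ by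
      simp only [ContinuousMap.add_apply, mul_add, Finset.sum_add_distrib]
      rw [integral_add (integrable_circle H₁) (integrable_circle H₂)]
      ring)
    (fun c f H ↦ by
      simp only [ContinuousMap.smul_apply, smul_eq_mul, mul_left_comm _ c, ← Finset.mul_sum,
        integral_const_mul]
      ring)

lemma inverseDiscrepancy_apply (f H : C(UnitAddCircle, ℂ)) :
    inverseDiscrepancy q f H = (∑ x : (ZMod q)ˣ, f (ZMod.toAddCircle (x : ZMod q)) *
      H (ZMod.toAddCircle (↑x⁻¹ : ZMod q)) - q.totient * ((∫ t, f t) * ∫ t, H t)) / q := rfl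

lemma norm_inverseDiscrepancy_le (f H : C(UnitAddCircle, ℂ)) :
    ‖inverseDiscrepancy q f H‖ ≤ 2 * ‖f‖ * ‖H‖ := by
  have hq : (0 : ℝ) < q := by exact_mod_cast NeZero.pos q
  have totient_le : (q.totient : ℝ) ≤ q := by exact_mod_cast Nat.totient_le q
  have sum_le : ‖∑ x : (ZMod q)ˣ, f (ZMod.toAddCircle (x : ZMod q)) *
      H (ZMod.toAddCircle (↑x⁻¹ : ZMod q))‖ ≤ q.totient * (‖f‖ * ‖H‖) := by
    rw [← ZMod.card_units_eq_totient, ← nsmul_eq_mul, ← Finset.card_univ]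
    refine (norm_sum_le _ _).trans (Finset.sum_le_card_nsmul _ _ _ fun x _ ↦ ?_)
    rw [norm_mul]
    gcongr <;> exact ContinuousMap.norm_coe_le_norm ..
  rw [inverseDiscrepancy_apply, norm_div, Complex.norm_natCast, div_le_iff₀ hq]
  calc _ ≤ q.totient * (‖f‖ * ‖H‖) + q.totient * (‖f‖ * ‖H‖) := by
        refine (norm_sub_le _ _).trans (add_le_add sum_le ?_)
        rw [norm_mul, norm_mul, Complex.norm_natCast]
        gcongr <;> exact norm_integral_circle_le _
    _ = 2 * ‖f‖ * ‖H‖ * q.totient := by ring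
    _ ≤ 2 * ‖f‖ * ‖H‖ * q := by gcongr

lemma fourier_toAddCircle (h : ℤ) (x : ZMod q) :
    (fourier h : C(UnitAddCircle, ℂ)) (ZMod.toAddCircle x) =
      ZMod.stdAddChar ((h : ZMod q) * x) := by
  rw [fourier_apply, ← map_zsmul (ZMod.toAddCircle (N := q)), zsmul_eq_mul]
  rfl

lemma inverseDiscrepancy_fourier {h k : ℤ} (hhk : h ≠ 0 ∨ k ≠ 0) :
    inverseDiscrepancy q (fourier h) (fourier k) = kloostermanSum (h : ZMod q) k / q := by
  have integral_fourier {n : ℤ} (hn : n ≠ 0) : ∫ t : UnitAddCircle, fourier n t = 0 :=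
    integral_eq_zero_of_add_right_eq_neg (fourier_add_half_inv_index hn one_pos)
  have integral_mul : (∫ t : UnitAddCircle, fourier h t) * ∫ t : UnitAddCircle, fourier k t = 0 :=
    mul_eq_zero.mpr (hhk.imp integral_fourier integral_fourier)
  simp only [inverseDiscrepancy_apply, integral_mul, mul_zero, sub_zero, fourier_toAddCircle,
    ← AddChar.map_add_eq_mul, kloostermanSum]

lemma inverseDiscrepancy_fourier_zero : inverseDiscrepancy q (fourier 0) (fourier 0) = 0 := by
  simp [inverseDiscrepancy_apply, ZMod.card_units_eq_totient, Measure.real]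

end Discrepancy

lemma tendsto_inverseDiscrepancy (f H : C(UnitAddCircle, ℂ)) :
    Tendsto (fun n : ℕ ↦ inverseDiscrepancy (n + 1) f H) atTop (𝓝 0) := by
  have fourier_fourier (h k : ℤ) : Tendsto
      (fun n : ℕ ↦ inverseDiscrepancy (n + 1) (fourier h) (fourier k)) atTop (𝓝 0) := by
    by_cases hhk : h ≠ 0 ∨ k ≠ 0
    · refine tendsto_zero_iff_norm_tendsto_zero.mpr
        ((tendsto_norm_kloostermanSum_div hhk).congr fun n ↦ ?_)
      rw [inverseDiscrepancy_fourier _ hhk, norm_div, Complex.norm_natCast, Nat.cast_succ]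
    · push Not at hhk
      simp only [hhk, inverseDiscrepancy_fourier_zero, tendsto_const_nhds]
  have fourier_left (h : ℤ) : Tendsto
      (fun n : ℕ ↦ inverseDiscrepancy (n + 1) (fourier h) H) atTop (𝓝 0) :=
    tendsto_zero_of_dense_span (fun n ↦ norm_inverseDiscrepancy_le (n + 1) (fourier h))
      span_fourier_closure_eq_top (forall_mem_range.mpr (fourier_fourier h)) H
  refine tendsto_zero_of_dense_span (C := 2 * ‖H‖)
    (T := fun n : ℕ ↦ (inverseDiscrepancy (n + 1)).flip H) (fun n g ↦ ?_)
    span_fourier_closure_eq_top (forall_mem_range.mpr fourier_left) f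
  simpa [mul_right_comm] using norm_inverseDiscrepancy_le (n + 1) g H

/-- The sum of `g(x / q) H(x⁻¹ / q)` over the invertible residues `x` modulo `q`, the inverse being
represented in `[0, q)`. -/
noncomputable def inverseSum (q : ℕ) (g H : ℝ → ℝ) : ℝ :=
  ∑ x ∈ Finset.range q with q.Coprime x, g (x / q) * H (((x : ZMod q)⁻¹).val / q)

/-- The error `(∑ g(x / q) H(x⁻¹ / q) - φ(q) ∫ g ∫ H) / q` made when the invertible residues
`x` modulo `q` are treated as if `(x / q, x⁻¹ / q)` were equidistributed in the unit square. -/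
noncomputable def inverseError (q : ℕ) (g H : ℝ → ℝ) : ℝ :=
  (inverseSum q g H - q.totient * ((∫ v in (0 : ℝ)..1, g v) * ∫ v in (0 : ℝ)..1, H v)) / q

lemma inverseSum_eq_sum_units (q : ℕ) [NeZero q] (g H : ℝ → ℝ) :
    inverseSum q g H =
      ∑ x : (ZMod q)ˣ, g ((x : ZMod q).val / q) * H ((↑x⁻¹ : ZMod q).val / q) := by
  symm
  refine Finset.sum_bij (fun x _ ↦ (x : ZMod q).val) (fun x _ ↦ ?_) (fun x _ y _ h ↦ ?_)
    (fun x hx ↦ ?_) (fun x _ ↦ ?_)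
  · rw [Finset.mem_filter, Finset.mem_range]
    exact ⟨ZMod.val_lt _, (ZMod.val_coe_unit_coprime x).symm⟩
  · exact Units.ext (ZMod.val_injective q h)
  · rw [Finset.mem_filter, Finset.mem_range] at hx
    exact ⟨ZMod.unitOfCoprime x hx.2.symm, Finset.mem_univ _, by
      rw [ZMod.coe_unitOfCoprime, ZMod.val_natCast_of_lt hx.1]⟩
  · rw [ZMod.natCast_zmod_val, ZMod.inv_coe_unit]

lemma exists_circle_lift {g : ℝ → ℝ} (hg : ContinuousOn g (Icc 0 1)) (h01 : g 0 = g 1) :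
    ∃ f : C(UnitAddCircle, ℂ), (∀ v ∈ Ico (0 : ℝ) 1, f (v : UnitAddCircle) = g v) ∧
      ∫ t, f t = ((∫ v in (0 : ℝ)..1, g v : ℝ) : ℂ) := by
  refine ⟨⟨fun t ↦ ((AddCircle.liftIco 1 0 g t : ℝ) : ℂ), Complex.continuous_ofReal.comp
    (AddCircle.liftIco_zero_continuous h01 hg)⟩, fun v hv ↦ ?_, ?_⟩
  · exact congrArg Complex.ofReal (AddCircle.liftIco_zero_coe_apply hv)
  · have := AddCircle.integral_liftIoc_eq_intervalIntegral (T := 1) (t := 0) (f := g)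
    rw [AddCircle.liftIoc_eq_liftIco (by simpa using h01), zero_add] at this
    rw [← this]
    exact integral_ofReal

lemma tendsto_inverseError_of_continuousOn {g H : ℝ → ℝ} (hg : ContinuousOn g (Icc 0 1))
    (hg01 : g 0 = g 1) (hH : ContinuousOn H (Icc 0 1)) (hH01 : H 0 = H 1) :
    Tendsto (fun q ↦ inverseError q g H) atTop (𝓝 0) := by
  obtain ⟨f, hf, integral_f⟩ := exists_circle_lift hg hg01
  obtain ⟨F, hF, integral_F⟩ := exists_circle_lift hH hH01
  have val_div_mem (q : ℕ) [NeZero q] (x : ZMod q) : (x.val / q : ℝ) ∈ Ico (0 : ℝ) 1 :=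
    ⟨by positivity, by
      rw [div_lt_one (by exact_mod_cast NeZero.pos q)]; exact_mod_cast x.val_lt⟩
  have discrepancy_eq (q : ℕ) [NeZero q] :
      inverseDiscrepancy q f F = (inverseError q g H : ℂ) := by
    simp only [inverseDiscrepancy_apply, ZMod.toAddCircle_apply, hf _ (val_div_mem q _),
      hF _ (val_div_mem q _), integral_f, integral_F, inverseError, inverseSum_eq_sum_units]
    push_cast
    rfl
  rw [← tendsto_add_atTop_iff_nat 1]
  have := tendsto_inverseDiscrepancy f F
  simp only [discrepancy_eq] at this
  exact tendsto_ofReal_iff.mp (by simpa using this)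

section Sandwich

variable {f g H : ℝ → ℝ}

lemma inverseError_le_add {ε : ℝ} (hε : 0 ≤ ε) (le : ∀ v ∈ Ico (0 : ℝ) 1, g v ≤ f v)
    (integral_le : ∫ v in (0 : ℝ)..1, f v ≤ (∫ v in (0 : ℝ)..1, g v) + ε)
    (hH : ∀ v ∈ Icc (0 : ℝ) 1, 0 ≤ H v) (q : ℕ) :
    inverseError q g H ≤ inverseError q f H + ε * ∫ v in (0 : ℝ)..1, H v := by
  have integral_nonneg : 0 ≤ ∫ v in (0 : ℝ)..1, H v :=
    intervalIntegral.integral_nonneg zero_le_one hH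
  rcases Nat.eq_zero_or_pos q with rfl | hq
  · simpa [inverseError] using mul_nonneg hε integral_nonneg
  have : NeZero q := ⟨hq.ne'⟩
  have hq' : (0 : ℝ) < q := by exact_mod_cast hq
  have sum_le : inverseSum q g H ≤ inverseSum q f H := by
    refine Finset.sum_le_sum fun x hx ↦ mul_le_mul_of_nonneg_right (le _ ?_)
      (hH _ ⟨by positivity, (div_le_one hq').mpr (by exact_mod_cast (ZMod.val_lt _).le)⟩)
    have hx' : (x : ℝ) < q := by exact_mod_cast Finset.mem_range.mp (Finset.mem_of_mem_filter x hx)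
    exact ⟨by positivity, (div_lt_one hq').mpr hx'⟩
  have main_le : q.totient * ((∫ v in (0 : ℝ)..1, f v) * ∫ v in (0 : ℝ)..1, H v) ≤
      q.totient * ((∫ v in (0 : ℝ)..1, g v) * ∫ v in (0 : ℝ)..1, H v) +
        q * (ε * ∫ v in (0 : ℝ)..1, H v) :=
    calc _ ≤ q.totient * (((∫ v in (0 : ℝ)..1, g v) + ε) * ∫ v in (0 : ℝ)..1, H v) := by gcongr
      _ = q.totient * ((∫ v in (0 : ℝ)..1, g v) * ∫ v in (0 : ℝ)..1, H v) +
        q.totient * (ε * ∫ v in (0 : ℝ)..1, H v) := by ring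
      _ ≤ _ := by gcongr; exact_mod_cast q.totient_le
  rw [inverseError, inverseError, div_add' _ _ _ hq'.ne']
  gcongr
  linarith

lemma inverseError_neg (q : ℕ) : inverseError q (-g) H = -inverseError q g H := by
  simp only [inverseError, inverseSum, Pi.neg_apply, neg_mul, Finset.sum_neg_distrib,
    intervalIntegral.integral_neg]
  ring

lemma tendsto_inverseError_of_sandwich (hH : ∀ v ∈ Icc (0 : ℝ) 1, 0 ≤ H v)
    (sandwich : ∀ ε > 0, ∃ f₁ f₂ : ℝ → ℝ, (∀ v ∈ Ico (0 : ℝ) 1, f₁ v ≤ g v ∧ g v ≤ f₂ v) ∧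
      (∫ v in (0 : ℝ)..1, g v) ≤ (∫ v in (0 : ℝ)..1, f₁ v) + ε ∧
      (∫ v in (0 : ℝ)..1, f₂ v) ≤ (∫ v in (0 : ℝ)..1, g v) + ε ∧
      Tendsto (fun q ↦ inverseError q f₁ H) atTop (𝓝 0) ∧
      Tendsto (fun q ↦ inverseError q f₂ H) atTop (𝓝 0)) :
    Tendsto (fun q ↦ inverseError q g H) atTop (𝓝 0) := by
  set I := ∫ v in (0 : ℝ)..1, H v
  have hI : 0 ≤ I := intervalIntegral.integral_nonneg zero_le_one hH
  rw [Metric.tendsto_nhds]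
  intro ε hε
  set δ := ε / (2 * (I + 1)) with hδ
  have δ_pos : 0 < δ := by positivity
  have δ_mul_lt : δ * I ≤ ε / 2 := by
    rw [hδ, div_mul_eq_mul_div, div_le_div_iff₀ (by positivity) two_pos]
    nlinarith
  obtain ⟨f₁, f₂, between, integral₁, integral₂, tendsto₁, tendsto₂⟩ := sandwich δ δ_pos
  filter_upwards [Metric.tendsto_nhds.mp tendsto₁ (ε / 2) (by positivity),
    Metric.tendsto_nhds.mp tendsto₂ (ε / 2) (by positivity)] with q h₁ h₂
  rw [Real.dist_eq, sub_zero, abs_lt] at h₁ h₂ ⊢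
  have upper := inverseError_le_add δ_pos.le (fun v hv ↦ (between v hv).2) integral₂ hH q
  have lower := inverseError_le_add (f := -f₁) (g := -g) δ_pos.le
    (fun v hv ↦ neg_le_neg (between v hv).1)
    (by simp only [Pi.neg_apply, intervalIntegral.integral_neg]; linarith) hH q
  rw [inverseError_neg, inverseError_neg] at lower
  constructor <;> linarith

end Sandwich

section Trapezoid

/-- The trapezoid of height `1` over the interval `(l, r)` with sides of slope `± 1 / δ`: a
continuous approximation of the indicator function of `(l, r)`. -/
noncomputable def trapezoid (l r δ v : ℝ) : ℝ := max 0 (min 1 (min ((v - l) / δ) ((r - v) / δ)))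

variable {l r δ v : ℝ}

lemma continuous_trapezoid : Continuous (trapezoid l r δ) := by
  unfold trapezoid
  fun_prop

lemma trapezoid_nonneg : 0 ≤ trapezoid l r δ v := le_max_left _ _

lemma trapezoid_le_one : trapezoid l r δ v ≤ 1 := max_le zero_le_one (min_le_left _ _)

lemma trapezoid_eq_zero (hδ : 0 < δ) (hv : v ∉ Ioo l r) : trapezoid l r δ v = 0 := by
  rw [trapezoid, max_eq_left_iff, min_le_iff, min_le_iff]
  rcases le_or_gt v l with h | h
  · exact Or.inr (Or.inl (div_nonpos_of_nonpos_of_nonneg (by linarith) hδ.le))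
  · have : r ≤ v := not_lt.mp fun h' ↦ hv ⟨h, h'⟩
    exact Or.inr (Or.inr (div_nonpos_of_nonpos_of_nonneg (by linarith) hδ.le))

lemma trapezoid_eq_one (hδ : 0 < δ) (hv : v ∈ Icc (l + δ) (r - δ)) : trapezoid l r δ v = 1 := by
  have h₁ : 1 ≤ (v - l) / δ := (one_le_div hδ).mpr (by linarith [hv.1])
  have h₂ : 1 ≤ (r - v) / δ := (one_le_div hδ).mpr (by linarith [hv.2])
  rw [trapezoid, min_eq_left (le_min h₁ h₂), max_eq_right zero_le_one]

lemma trapezoid_le_indicator (hδ : 0 < δ) :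
    trapezoid l r δ v ≤ (Ioo l r).indicator 1 v := by
  by_cases hv : v ∈ Ioo l r
  · simpa [hv] using trapezoid_le_one
  · simp [hv, trapezoid_eq_zero hδ hv]

lemma indicator_le_trapezoid (hδ : 0 < δ) :
    (Ioo l r).indicator 1 v ≤ trapezoid (l - δ) (r + δ) δ v := by
  by_cases hv : v ∈ Ioo l r
  · rw [trapezoid_eq_one hδ ⟨by linarith [hv.1], by linarith [hv.2]⟩]
    simp [hv]
  · simpa [hv] using trapezoid_nonneg

lemma trapezoid_sub_trapezoid_le (hδ : 0 < δ) :
    trapezoid (l - δ) (r + δ) δ v - trapezoid l r δ v ≤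
      (Icc (l - δ) (l + δ)).indicator 1 v + (Icc (r - δ) (r + δ)).indicator 1 v := by
  have nonneg (s : Set ℝ) : (0 : ℝ) ≤ s.indicator 1 v := indicator_nonneg (fun _ _ ↦ zero_le_one) v
  by_cases h : v ∈ Icc (l - δ) (l + δ) ∪ Icc (r - δ) (r + δ)
  · have : 1 ≤ (Icc (l - δ) (l + δ)).indicator (1 : ℝ → ℝ) v +
        (Icc (r - δ) (r + δ)).indicator (1 : ℝ → ℝ) v := by
      rcases h with h | h
      · simpa [h] using nonneg _
      · simpa [h] using nonneg _
    linarith [trapezoid_le_one (l := l - δ) (r := r + δ) (δ := δ) (v := v),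
      trapezoid_nonneg (l := l) (r := r) (δ := δ) (v := v)]
  · have equal : trapezoid (l - δ) (r + δ) δ v = trapezoid l r δ v := by
      by_cases hv : v ∈ Icc (l + δ) (r - δ)
      · rw [trapezoid_eq_one hδ hv,
          trapezoid_eq_one hδ ⟨by linarith [hv.1], by linarith [hv.2]⟩]
      · rw [trapezoid_eq_zero hδ fun h' ↦ ?_, trapezoid_eq_zero hδ fun h' ↦ ?_]
        all_goals
          simp only [mem_union, mem_Icc, mem_Ioo, not_or, not_and_or, not_le] at *
          grind
    rw [equal, sub_self]
    exact add_nonneg (nonneg _) (nonneg _)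

lemma integral_indicator_Icc_le {a b : ℝ} (hab : a ≤ b) :
    ∫ v in (0 : ℝ)..1, (Icc a b).indicator (1 : ℝ → ℝ) v ≤ b - a := by
  rw [intervalIntegral.integral_of_le zero_le_one, setIntegral_indicator measurableSet_Icc]
  simp only [Pi.one_apply, setIntegral_const, smul_eq_mul, mul_one]
  calc volume.real (Ioc 0 1 ∩ Icc a b) ≤ volume.real (Icc a b) :=
        measureReal_mono inter_subset_right (by simp)
    _ = b - a := by simp [hab]

lemma intervalIntegrable_trapezoid_mul {w : ℝ → ℝ} (hw : ContinuousOn w (Icc 0 1)) :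
    IntervalIntegrable (fun v ↦ trapezoid l r δ v * w v) volume 0 1 := by
  refine ContinuousOn.intervalIntegrable ?_
  rw [uIcc_of_le zero_le_one]
  exact continuous_trapezoid.continuousOn.mul hw

lemma integral_trapezoid_mul_sub_le {w : ℝ → ℝ} {W : ℝ} (hδ : 0 < δ)
    (hw : ContinuousOn w (Icc 0 1)) (nonneg : ∀ v ∈ Icc (0 : ℝ) 1, 0 ≤ w v)
    (le : ∀ v ∈ Icc (0 : ℝ) 1, w v ≤ W) :
    (∫ v in (0 : ℝ)..1, trapezoid (l - δ) (r + δ) δ v * w v) -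
      ∫ v in (0 : ℝ)..1, trapezoid l r δ v * w v ≤ 4 * δ * W := by
  have hW : 0 ≤ W := (nonneg 0 (by simp)).trans (le 0 (by simp))
  have integrable (a b : ℝ) :
      IntervalIntegrable ((Icc a b).indicator (1 : ℝ → ℝ)) volume 0 1 := by
    rw [intervalIntegrable_iff]
    exact (integrableOn_const (C := (1 : ℝ)) (by simp)).indicator measurableSet_Icc
  have outer := intervalIntegrable_trapezoid_mul (l := l - δ) (r := r + δ) (δ := δ) hw
  have inner := intervalIntegrable_trapezoid_mul (l := l) (r := r) (δ := δ) hw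
  rw [← intervalIntegral.integral_sub outer inner]
  calc ∫ v in (0 : ℝ)..1, (trapezoid (l - δ) (r + δ) δ v * w v - trapezoid l r δ v * w v)
      ≤ ∫ v in (0 : ℝ)..1,
          ((Icc (l - δ) (l + δ)).indicator 1 v + (Icc (r - δ) (r + δ)).indicator 1 v) * W := by
        refine intervalIntegral.integral_mono_on zero_le_one (outer.sub inner)
          (((integrable _ _).add (integrable _ _)).mul_const W) fun v hv ↦ ?_
        rw [← sub_mul]
        exact mul_le_mul (trapezoid_sub_trapezoid_le hδ) (le v hv) (nonneg v hv)
          (add_nonneg (indicator_nonneg (by simp) v) (indicator_nonneg (by simp) v))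
    _ ≤ (((l + δ) - (l - δ)) + ((r + δ) - (r - δ))) * W := by
        rw [intervalIntegral.integral_mul_const,
          intervalIntegral.integral_add (integrable _ _) (integrable _ _)]
        gcongr <;> exact integral_indicator_Icc_le (by linarith)
    _ = 4 * δ * W := by ring

lemma tendsto_inverseError_trapezoid_mul {w H : ℝ → ℝ} (hδ : 0 < δ) (hl : 0 ≤ l) (hr : r ≤ 1)
    (hw : ContinuousOn w (Icc 0 1)) (hH : ContinuousOn H (Icc 0 1)) (hH01 : H 0 = H 1) :
    Tendsto (fun q ↦ inverseError q (fun v ↦ trapezoid l r δ v * w v) H) atTop (𝓝 0) := by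
  refine tendsto_inverseError_of_continuousOn (continuous_trapezoid.continuousOn.mul hw) ?_ hH hH01
  rw [trapezoid_eq_zero hδ (by simp [hl]), trapezoid_eq_zero hδ (by simp [hr])]
  simp

end Trapezoid

lemma tendsto_inverseError_indicator {w H : ℝ → ℝ} {l r : ℝ} (hl : 0 < l) (hr : r < 1)
    (hw : ContinuousOn w (Icc 0 1)) (w_nonneg : ∀ v ∈ Icc (0 : ℝ) 1, 0 ≤ w v)
    (hH : ContinuousOn H (Icc 0 1)) (hH01 : H 0 = H 1) (H_nonneg : ∀ v ∈ Icc (0 : ℝ) 1, 0 ≤ H v) :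
    Tendsto (fun q ↦ inverseError q ((Ioo l r).indicator w) H) atTop (𝓝 0) := by
  obtain ⟨W, hW⟩ := (isCompact_Icc.image_of_continuousOn hw).bddAbove
  refine tendsto_inverseError_of_sandwich H_nonneg fun ε hε ↦ ?_
  obtain ⟨δ, hδ, δ_lt_l, δ_lt_r, small⟩ : ∃ δ > 0, δ < l ∧ δ < 1 - r ∧ 4 * δ * W < ε := by
    have tendsto_zero : Tendsto (fun δ : ℝ ↦ 4 * δ * W) (𝓝 0) (𝓝 0) :=
      Continuous.tendsto' (by fun_prop) 0 0 (by simp)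
    have near_zero : ∀ᶠ δ in 𝓝 (0 : ℝ), δ < l ∧ δ < 1 - r ∧ 4 * δ * W < ε :=
      (eventually_lt_nhds hl).and
        ((eventually_lt_nhds (sub_pos.mpr hr)).and (tendsto_zero.eventually_lt_const hε))
    have near_zero_right : ∀ᶠ δ in 𝓝[>] (0 : ℝ), 0 < δ ∧ δ < l ∧ δ < 1 - r ∧ 4 * δ * W < ε :=
      eventually_mem_nhdsWithin.and (near_zero.filter_mono nhdsWithin_le_nhds)
    exact near_zero_right.exists
  have between : ∀ v ∈ Icc (0 : ℝ) 1, trapezoid l r δ v * w v ≤ (Ioo l r).indicator w v ∧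
      (Ioo l r).indicator w v ≤ trapezoid (l - δ) (r + δ) δ v * w v := fun v hv ↦ by
    have indicator_eq : (Ioo l r).indicator w v = (Ioo l r).indicator 1 v * w v := by
      by_cases h : v ∈ Ioo l r <;> simp [h]
    rw [indicator_eq]
    exact ⟨mul_le_mul_of_nonneg_right (trapezoid_le_indicator hδ) (w_nonneg v hv),
      mul_le_mul_of_nonneg_right (indicator_le_trapezoid hδ) (w_nonneg v hv)⟩
  have integrable : IntervalIntegrable ((Ioo l r).indicator w) volume 0 1 := by
    rw [intervalIntegrable_iff_integrableOn_Ioc_of_le zero_le_one]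
    exact ((hw.integrableOn_Icc).mono_set Ioc_subset_Icc_self).indicator measurableSet_Ioo
  have gap := integral_trapezoid_mul_sub_le (l := l) (r := r) hδ hw w_nonneg
    fun v hv ↦ hW (mem_image_of_mem w hv)
  have lower := intervalIntegral.integral_mono_on zero_le_one (intervalIntegrable_trapezoid_mul hw)
    integrable fun v hv ↦ (between v hv).1
  have upper := intervalIntegral.integral_mono_on zero_le_one integrable
    (intervalIntegrable_trapezoid_mul hw) fun v hv ↦ (between v hv).2
  exact ⟨_, _, fun v hv ↦ between v (Ico_subset_Icc_self hv), by linarith, by linarith,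
    tendsto_inverseError_trapezoid_mul hδ hl.le hr.le hw hH hH01,
    tendsto_inverseError_trapezoid_mul hδ (by linarith) (by linarith) hw hH hH01⟩

/-! ### Averages of the totient function -/

/-- The natural numbers strictly between the reals `s ≥ 0` and `t`. -/
noncomputable def natIoo (s t : ℝ) : Finset ℕ := Finset.Ioo ⌊s⌋₊ ⌈t⌉₊

lemma mem_natIoo {s t : ℝ} (hs : 0 ≤ s) {q : ℕ} : q ∈ natIoo s t ↔ s < q ∧ q < t := by
  rw [natIoo, Finset.mem_Ioo, Nat.floor_lt hs, Nat.lt_ceil]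

lemma tendsto_sum_range_inv_sub_log : Tendsto
    (fun n : ℕ ↦ ∑ q ∈ Finset.range n, (q : ℝ)⁻¹ - Real.log n) atTop
    (𝓝 Real.eulerMascheroniConstant) := by
  have := Real.tendsto_harmonic_sub_log.sub (tendsto_inv_atTop_nhds_zero_nat (𝕜 := ℝ))
  rw [sub_zero] at this
  refine this.congr fun n ↦ ?_
  have range_succ : ∑ q ∈ Finset.range (n + 1), (q : ℝ)⁻¹ = harmonic n := by
    rw [Finset.sum_range_succ', harmonic]
    simp
  rw [← range_succ, Finset.sum_range_succ]
  ring

section Window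

variable {a b : ℝ}

lemma tendsto_sum_inv_natIoo (ha : 0 < a) (hab : a < b) :
    Tendsto (fun R : ℝ ↦ ∑ q ∈ natIoo (a * R) (b * R), (q : ℝ)⁻¹) atTop
      (𝓝 (Real.log (b / a))) := by
  have hb : 0 < b := ha.trans hab
  have tendsto_ceil : Tendsto (fun R : ℝ ↦ ⌈b * R⌉₊) atTop atTop :=
    tendsto_nat_ceil_atTop.comp (tendsto_id.const_mul_atTop hb)
  have tendsto_floor : Tendsto (fun R : ℝ ↦ ⌊a * R⌋₊ + 1) atTop atTop :=
    (tendsto_add_atTop_nat 1).comp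
      (tendsto_nat_floor_atTop.comp (tendsto_id.const_mul_atTop ha))
  have tendsto_ratio : Tendsto (fun R : ℝ ↦ (⌈b * R⌉₊ : ℝ) / ((⌊a * R⌋₊ + 1 : ℕ) : ℝ)) atTop
      (𝓝 (b / a)) := by
    have floor := (tendsto_nat_floor_mul_div_atTop ha.le).add (tendsto_inv_atTop_zero (𝕜 := ℝ))
    rw [add_zero] at floor
    refine ((tendsto_nat_ceil_mul_div_atTop hb.le).div floor ha.ne').congr' ?_
    filter_upwards [eventually_gt_atTop 0] with R hR
    rw [Pi.div_apply]
    push_cast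
    field_simp
  have tendsto_log := (Real.continuousAt_log (div_pos hb ha).ne').tendsto.comp tendsto_ratio
  have := ((tendsto_sum_range_inv_sub_log.comp tendsto_ceil).sub
    (tendsto_sum_range_inv_sub_log.comp tendsto_floor)).add tendsto_log
  rw [sub_self, zero_add] at this
  refine this.congr' ?_
  filter_upwards [eventually_ge_atTop (1 / (b - a)), eventually_gt_atTop 0] with R hR R_pos
  have gap : a * R + 1 ≤ b * R := by
    rw [div_le_iff₀ (sub_pos.mpr hab)] at hR
    linarith
  have floor_lt : ⌊a * R⌋₊ + 1 ≤ ⌈b * R⌉₊ := by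
    exact_mod_cast (add_le_add_left (Nat.floor_le (by positivity)) (1 : ℝ)).trans
      (gap.trans (Nat.le_ceil _))
  have ceil_ne : (⌈b * R⌉₊ : ℝ) ≠ 0 := by exact_mod_cast (by omega : ⌈b * R⌉₊ ≠ 0)
  have floor_ne : ((⌊a * R⌋₊ + 1 : ℕ) : ℝ) ≠ 0 := by positivity
  have natIoo_eq : natIoo (a * R) (b * R) = Finset.Ico (⌊a * R⌋₊ + 1) ⌈b * R⌉₊ := by
    ext q
    rw [natIoo, Finset.mem_Ioo, Finset.mem_Ico, Nat.succ_le_iff]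
  simp only [Function.comp_apply]
  rw [Real.log_div ceil_ne floor_ne, natIoo_eq, Finset.sum_Ico_eq_sub _ floor_lt]
  ring

lemma sum_inv_natIoo_le (ha : 0 < a) (hb : 0 < b) {R : ℝ} (hR : 0 < R) :
    ∑ q ∈ natIoo (a * R) (b * R), (q : ℝ)⁻¹ ≤ b / a := by
  have card_le : ((natIoo (a * R) (b * R)).card : ℝ) ≤ b * R := by
    rw [natIoo, Nat.card_Ioo]
    have := Nat.ceil_le_floor_add_one (b * R)
    exact (Nat.cast_le.mpr (by omega : _ ≤ ⌊b * R⌋₊)).trans (Nat.floor_le (by positivity))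
  calc ∑ q ∈ natIoo (a * R) (b * R), (q : ℝ)⁻¹
      ≤ (natIoo (a * R) (b * R)).card • (a * R)⁻¹ := by
        refine Finset.sum_le_card_nsmul _ _ _ fun q hq ↦ ?_
        rw [mem_natIoo (by positivity)] at hq
        gcongr
        exact hq.1.le
    _ ≤ b * R * (a * R)⁻¹ := by rw [nsmul_eq_mul]; gcongr
    _ = b / a := by field_simp

end Window

open scoped ArithmeticFunction.Moebius in
lemma totient_div_sq_eq_sum (q : ℕ) :
    (q.totient : ℝ) / q ^ 2 =
      ∑ x ∈ q.divisorsAntidiagonal, (μ x.1 : ℝ) / x.1 ^ 2 * (x.2 : ℝ)⁻¹ := by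
  rcases Nat.eq_zero_or_pos q with rfl | hq
  · simp
  have totient_eq := (ArithmeticFunction.sum_eq_iff_sum_mul_moebius_eq (R := ℝ)
    (f := fun n ↦ (n.totient : ℝ)) (g := fun n ↦ (n : ℝ))).mp
    (fun n _ ↦ by exact_mod_cast n.sum_totient) q hq
  rw [← totient_eq, Finset.sum_div]
  refine Finset.sum_congr rfl fun x hx ↦ ?_
  obtain ⟨rfl, -⟩ := Nat.mem_divisorsAntidiagonal.mp hx
  have : (x.1 : ℝ) ≠ 0 := by exact_mod_cast left_ne_zero_of_mul hq.ne'
  have : (x.2 : ℝ) ≠ 0 := by exact_mod_cast right_ne_zero_of_mul hq.ne'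
  push_cast
  field_simp

lemma mem_natIoo_div_iff {s t : ℝ} (hs : 0 ≤ s) {d e : ℕ} (hd : 0 < d) :
    e ∈ natIoo (s / d) (t / d) ↔ d * e ∈ natIoo s t := by
  have : (0 : ℝ) < d := by exact_mod_cast hd
  rw [mem_natIoo (by positivity), mem_natIoo hs, div_lt_iff₀' this, lt_div_iff₀' this]
  push_cast
  rfl

lemma lt_ceil_of_mul_mem_natIoo {s t : ℝ} {d e : ℕ} (he : e ≠ 0) (h : d * e ∈ natIoo s t) :
    d < ⌈t⌉₊ := by
  rw [natIoo, Finset.mem_Ioo] at h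
  exact (Nat.le_mul_of_pos_right d (Nat.pos_of_ne_zero he)).trans_lt h.2

open scoped ArithmeticFunction.Moebius in
lemma sum_totient_div_sq_natIoo {s : ℝ} (hs : 0 ≤ s) (t : ℝ) :
    ∑ q ∈ natIoo s t, (q.totient : ℝ) / q ^ 2 =
      ∑' d : ℕ, (μ d : ℝ) / d ^ 2 * ∑ e ∈ natIoo (s / d) (t / d), (e : ℝ)⁻¹ := by
  have support : ∀ d ∉ Finset.Ico 1 ⌈t⌉₊,
      (μ d : ℝ) / d ^ 2 * ∑ e ∈ natIoo (s / d) (t / d), (e : ℝ)⁻¹ = 0 := fun d hd ↦ by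
    rcases Nat.eq_zero_or_pos d with rfl | d_pos
    · simp
    · refine mul_eq_zero_of_right _ (Finset.sum_eq_zero fun e he ↦ ?_)
      have : e = 0 := by
        by_contra e_ne
        exact hd (Finset.mem_Ico.mpr
          ⟨d_pos, lt_ceil_of_mul_mem_natIoo e_ne ((mem_natIoo_div_iff hs d_pos).mp he)⟩)
      simp [this]
  rw [tsum_eq_sum support]
  simp only [totient_div_sq_eq_sum, Finset.mul_sum]
  rw [Finset.sum_sigma', Finset.sum_sigma']
  refine Finset.sum_nbij' (fun x ↦ ⟨x.2.1, x.2.2⟩) (fun x ↦ ⟨x.1 * x.2, (x.1, x.2)⟩)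
    (fun x hx ↦ ?_) (fun x hx ↦ ?_) (fun x hx ↦ ?_) (fun x _ ↦ rfl) (fun x _ ↦ rfl)
  · obtain ⟨q, d, e⟩ := x
    simp only [Finset.mem_sigma, Nat.mem_divisorsAntidiagonal] at hx ⊢
    obtain ⟨hq, rfl, ne⟩ := hx
    have d_pos := Nat.pos_of_ne_zero (left_ne_zero_of_mul ne)
    exact ⟨Finset.mem_Ico.mpr ⟨d_pos, lt_ceil_of_mul_mem_natIoo (right_ne_zero_of_mul ne) hq⟩,
      (mem_natIoo_div_iff hs d_pos).mpr hq⟩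
  · obtain ⟨d, e⟩ := x
    simp only [Finset.mem_sigma, Nat.mem_divisorsAntidiagonal, Finset.mem_Ico] at hx ⊢
    have hde := (mem_natIoo_div_iff hs (by omega)).mp hx.2
    refine ⟨hde, trivial, ?_⟩
    rw [natIoo, Finset.mem_Ioo] at hde
    omega
  · obtain ⟨q, d, e⟩ := x
    simp only [Finset.mem_sigma, Nat.mem_divisorsAntidiagonal] at hx
    obtain ⟨-, rfl, -⟩ := hx
    rfl

open scoped ArithmeticFunction.Moebius in
lemma hasSum_moebius_div_sq : HasSum (fun d : ℕ ↦ (μ d : ℝ) / d ^ 2) (6 / Real.pi ^ 2) := by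
  have two_re : 1 < (2 : ℂ).re := by norm_num
  have := ((ArithmeticFunction.LSeriesSummable_moebius_iff (s := 2)).mpr two_re).hasSum
  have value : LSeries (fun n ↦ ((μ n : ℤ) : ℂ)) 2 = ((6 / Real.pi ^ 2 : ℝ) : ℂ) := by
    have product := ArithmeticFunction.LSeries_zeta_mul_Lseries_moebius two_re
    rw [ArithmeticFunction.LSeries_zeta_eq_riemannZeta two_re, riemannZeta_two] at product
    have : (Real.pi : ℂ) ≠ 0 := by exact_mod_cast Real.pi_ne_zero
    push_cast
    field_simp at product ⊢
    exact product
  rw [← LSeries, value] at this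
  rw [← Complex.hasSum_ofReal]
  convert this using 2 with d
  rcases eq_or_ne d 0 with rfl | hd
  · simp
  · rw [LSeries.term_of_ne_zero hd]
    push_cast
    norm_num

lemma tendsto_sum_totient_div_sq {a b : ℝ} (ha : 0 < a) (hab : a < b) :
    Tendsto (fun R : ℝ ↦ ∑ q ∈ natIoo (a * R) (b * R), (q.totient : ℝ) / q ^ 2) atTop
      (𝓝 (6 / Real.pi ^ 2 * Real.log (b / a))) := by
  rw [← hasSum_moebius_div_sq.tsum_eq, ← tsum_mul_right]
  refine (tendsto_tsum_of_dominated_convergence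
    (f := fun R (d : ℕ) ↦ (ArithmeticFunction.moebius d : ℝ) / d ^ 2 *
      ∑ e ∈ natIoo (a * (R / d)) (b * (R / d)), (e : ℝ)⁻¹)
    (hasSum_moebius_div_sq.summable.norm.mul_right (b / a)) (fun d ↦ ?_) ?_).congr' ?_
  · rcases Nat.eq_zero_or_pos d with rfl | hd
    · simp
    · exact ((tendsto_sum_inv_natIoo ha hab).comp
        (tendsto_id.atTop_div_const (by exact_mod_cast hd))).const_mul _
  · filter_upwards [eventually_gt_atTop 0] with R hR d
    rcases Nat.eq_zero_or_pos d with rfl | hd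
    · simp
    · rw [norm_mul, Real.norm_of_nonneg (Finset.sum_nonneg fun e _ ↦ by positivity)]
      gcongr
      exact sum_inv_natIoo_le ha (ha.trans hab) (by positivity)
  · filter_upwards [eventually_gt_atTop 0] with R hR
    rw [sum_totient_div_sq_natIoo (by positivity)]
    simp only [mul_div_assoc]

lemma tendsto_sum_natIoo_of_tendsto {a b A : ℝ} {s : ℕ → ℝ} (ha : 0 < a) (hab : a < b)
    (hs : Tendsto (fun q : ℕ ↦ q * s q - A * (q.totient / q)) atTop (𝓝 0)) :
    Tendsto (fun R : ℝ ↦ ∑ q ∈ natIoo (a * R) (b * R), s q) atTop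
      (𝓝 (A * (6 / Real.pi ^ 2 * Real.log (b / a)))) := by
  have hb : 0 < b := ha.trans hab
  have error : Tendsto (fun R : ℝ ↦ ∑ q ∈ natIoo (a * R) (b * R),
      (q * s q - A * (q.totient / q)) * (q : ℝ)⁻¹) atTop (𝓝 0) := by
    rw [Metric.tendsto_nhds]
    intro ε hε
    obtain ⟨Q, hQ⟩ := Metric.tendsto_atTop.mp hs (ε * a / (2 * b)) (by positivity)
    filter_upwards [eventually_ge_atTop (Q / a), eventually_gt_atTop 0] with R hR R_pos
    rw [dist_zero_right]
    calc _ ≤ ∑ q ∈ natIoo (a * R) (b * R), ε * a / (2 * b) * (q : ℝ)⁻¹ := by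
          refine norm_sum_le_of_le _ fun q hq ↦ ?_
          rw [mem_natIoo (by positivity)] at hq
          have : Q ≤ q := by
            rw [div_le_iff₀' ha] at hR
            exact_mod_cast hR.trans hq.1.le
          rw [norm_mul, norm_inv, Real.norm_natCast]
          gcongr
          simpa using (hQ q this).le
      _ ≤ ε * a / (2 * b) * (b / a) := by
          rw [← Finset.mul_sum]
          gcongr
          exact sum_inv_natIoo_le ha hb R_pos
      _ = ε / 2 := by field_simp
      _ < ε := half_lt_self hε
  have := ((tendsto_sum_totient_div_sq ha hab).const_mul A).add error
  rw [add_zero] at this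
  refine this.congr' ?_
  filter_upwards [eventually_gt_atTop 0] with R hR
  rw [Finset.mul_sum, ← Finset.sum_add_distrib]
  refine Finset.sum_congr rfl fun q hq ↦ ?_
  rw [mem_natIoo (by positivity)] at hq
  have : (q : ℝ) ≠ 0 := ((by positivity : 0 ≤ a * R).trans_lt hq.1).ne'
  field_simp
  ring

/-! ### Consecutive denominators of convergents -/

/-- The irrational numbers of the unit interval, whose continued fraction expansion is infinite. -/
def unitIrrationals : Set ℝ := {α | α ∈ Ioo (0 : ℝ) 1 ∧ Irrational α}

section GaussMap

variable {α t : ℝ}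

lemma irrational_gaussMap (hα : Irrational α) : Irrational (gaussMap α) := by
  rw [gaussMap, Int.fract, one_div]
  exact hα.inv.sub_intCast _

lemma gaussMap_mem_unitIrrationals (hα : Irrational α) : gaussMap α ∈ unitIrrationals :=
  ⟨⟨(Int.fract_nonneg _).lt_of_ne (irrational_gaussMap hα).ne_zero.symm, Int.fract_lt_one _⟩,
    irrational_gaussMap hα⟩

lemma iterate_gaussMap_mem_unitIrrationals (hα : α ∈ unitIrrationals) (n : ℕ) :
    gaussMap^[n] α ∈ unitIrrationals := by
  induction n with
  | zero => exact hα
  | succ n ih =>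
    rw [Function.iterate_succ_apply']
    exact gaussMap_mem_unitIrrationals ih.2

lemma pq_one : pq α 1 = ⌊1 / α⌋₊ := rfl

lemma pq_iterate_gaussMap (n : ℕ) : pq (gaussMap^[n] α) 1 = pq α (n + 1) := by
  simp [pq]

lemma pq_pos (hα : α ∈ unitIrrationals) (n : ℕ) : 0 < pq α n := by
  obtain ⟨pos, lt_one⟩ := (iterate_gaussMap_mem_unitIrrationals hα (n - 1)).1
  rw [pq, Nat.floor_pos, le_div_iff₀ pos]
  linarith

lemma gaussMap_one_div_add (a : ℕ) (ht : t ∈ Ico (0 : ℝ) 1) : gaussMap (1 / (a + t)) = t := by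
  rw [gaussMap, one_div_one_div, Int.fract_natCast_add, Int.fract_eq_self.mpr ht]

lemma pq_one_div_add (a : ℕ) (ht : t ∈ Ico (0 : ℝ) 1) : pq (1 / (a + t)) 1 = a := by
  rw [pq_one, one_div_one_div, Nat.floor_eq_iff (add_nonneg a.cast_nonneg ht.1)]
  constructor <;> linarith [ht.1, ht.2]

lemma mul_pq_add_gaussMap (hα : 0 < α) : α * (pq α 1 + gaussMap α) = 1 := by
  have floor_add_fract : (pq α 1 : ℝ) + gaussMap α = 1 / α := by
    rw [pq_one, gaussMap, natCast_floor_eq_intCast_floor (by positivity), Int.floor_add_fract]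
  rw [floor_add_fract, mul_one_div_cancel hα.ne']

end GaussMap

section Convergents

variable {b : ℕ → ℕ}

lemma qden_add_two (b : ℕ → ℕ) (n : ℕ) :
    qden b (n + 2) = b (n + 2) * qden b (n + 1) + qden b n := rfl

lemma pnum_add_two (b : ℕ → ℕ) (n : ℕ) :
    pnum b (n + 2) = b (n + 2) * pnum b (n + 1) + pnum b n := rfl

lemma qden_pos (hb : ∀ n, 0 < b n) (n : ℕ) : 0 < qden b n := by
  induction n using Nat.twoStepInduction with
  | zero => exact one_pos
  | one => exact hb 1
  | more n ih _ => exact Nat.add_pos_right _ ih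

lemma qden_lt_qden (hb : ∀ n, 0 < b n) (n : ℕ) : qden b (n + 1) < qden b (n + 2) :=
  calc qden b (n + 1) ≤ b (n + 2) * qden b (n + 1) := Nat.le_mul_of_pos_left _ (hb _)
    _ < qden b (n + 2) := Nat.lt_add_of_pos_right (qden_pos hb n)

lemma qden_mono (hb : ∀ n, 0 < b n) : Monotone (qden b) :=
  monotone_nat_of_le_succ fun n ↦ match n with
    | 0 => hb 1
    | n + 1 => (qden_lt_qden hb n).le

lemma le_qden (hb : ∀ n, 0 < b n) (n : ℕ) : n ≤ qden b n := by
  induction n with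
  | zero => exact Nat.zero_le _
  | succ n ih =>
    match n with
    | 0 => exact hb 1
    | n + 1 => exact Nat.succ_le_of_lt (ih.trans_lt (qden_lt_qden hb n))

lemma pnum_le_qden (hb : ∀ n, 0 < b n) (n : ℕ) : pnum b n ≤ qden b n := by
  induction n using Nat.twoStepInduction with
  | zero => exact Nat.zero_le _
  | one => exact hb 1
  | more n ih ih' =>
    rw [qden_add_two, pnum_add_two]
    gcongr

lemma pnum_mul_qden_sub (b : ℕ → ℕ) (n : ℕ) :
    (pnum b (n + 1) : ℤ) * qden b n - pnum b n * qden b (n + 1) = (-1) ^ n := by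
  induction n with
  | zero => simp [pnum, qden]
  | succ n ih =>
    rw [qden_add_two, pnum_add_two, pow_succ]
    push_cast
    linear_combination -ih

lemma mul_qden_add_qden_mul {α : ℝ} (hα : α ∈ unitIrrationals) (n : ℕ) :
    α * (qden (pq α) (n + 1) + qden (pq α) n * gaussMap^[n + 1] α) =
      pnum (pq α) (n + 1) + pnum (pq α) n * gaussMap^[n + 1] α := by
  induction n with
  | zero => simpa [qden, pnum] using mul_pq_add_gaussMap hα.1.1
  | succ n ih =>
    have pos := (iterate_gaussMap_mem_unitIrrationals hα (n + 1)).1.1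
    have tail := mul_pq_add_gaussMap pos
    rw [pq_iterate_gaussMap, ← Function.iterate_succ_apply' gaussMap] at tail
    refine mul_left_cancel₀ pos.ne' ?_
    rw [qden_add_two, pnum_add_two]
    push_cast
    linear_combination ih + (α * qden (pq α) (n + 1) - pnum (pq α) (n + 1)) * tail

end Convergents

/-- The quotient `t` is the tail of the continued fraction of `α` that follows a convergent whose
denominator is `q`, the preceding denominator being `x`. -/
def IsTail (α : ℝ) (x q : ℕ) (t : ℝ) : Prop :=
  ∃ n, qden (pq α) n = x ∧ qden (pq α) (n + 1) = q ∧ gaussMap^[n + 1] α = t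

section IsTail

variable {α t : ℝ} {x q : ℕ}

lemma isTail_one_div_add (ht : t ∈ Ico (0 : ℝ) 1) : IsTail (1 / (q + t)) 1 q t :=
  ⟨0, rfl, pq_one_div_add q ht, gaussMap_one_div_add q ht⟩

lemma IsTail.step {r a : ℕ} (ht : t ∈ Ico (0 : ℝ) 1) (h : IsTail α r x (1 / (a + t))) :
    IsTail α x (a * x + r) t := by
  obtain ⟨n, h_r, h_x, h_tail⟩ := h
  refine ⟨n + 1, h_x, ?_, ?_⟩
  · rw [qden_add_two, h_r, h_x, ← pq_iterate_gaussMap (n + 1), h_tail, pq_one_div_add a ht]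
  · rw [Function.iterate_succ_apply', h_tail, gaussMap_one_div_add a ht]

lemma mem_Icc_of_isUnit_mul_sub_mul {p p' q x : ℤ} (hq : 1 < q) (hp : p ∈ Icc 0 q) (hx : 0 ≤ x)
    (det : IsUnit (p * x - p' * q)) : p' ∈ Icc 0 x := by
  have nonneg := mul_nonneg hp.1 hx
  have le := mul_le_mul_of_nonneg_right hp.2 hx
  rw [Int.isUnit_iff] at det
  constructor <;> by_contra! h <;> rcases det with det | det <;> nlinarith

lemma isTail_one_of_mul_add_eq {p p' : ℤ} (hq : 1 < q) (hp : p ∈ Icc 0 (q : ℤ))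
    (det : IsUnit (p * 1 - p' * q)) (ht : t ∈ Ioo (0 : ℝ) 1)
    (hα : α * (q + t) = p + p' * t) : IsTail α 1 q t := by
  have hp' := mem_Icc_of_isUnit_mul_sub_mul (by exact_mod_cast hq) hp one_pos.le det
  rw [Int.isUnit_iff] at det
  obtain ⟨ht₀, ht₁⟩ := ht
  obtain rfl | rfl : p' = 0 ∨ p' = 1 := by grind
  · obtain rfl : p = 1 := by grind
    have : α = 1 / (q + t) := by
      rw [eq_div_iff (by positivity)]
      simpa using hα
    exact this ▸ isTail_one_div_add ⟨ht₀.le, ht₁⟩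
  · obtain ⟨a, rfl⟩ : ∃ a, q = a + 1 := ⟨q - 1, by omega⟩
    obtain rfl : p = a := by grind
    have a_pos : (1 : ℝ) ≤ a := by exact_mod_cast Nat.lt_succ_iff.mp hq
    have : α = 1 / ((1 : ℕ) + 1 / (a + t)) := by
      push_cast at hα ⊢
      field_simp
      linarith
    have base := isTail_one_div_add (q := 1) (t := 1 / (a + t))
      ⟨by positivity, by rw [div_lt_one (by positivity)]; linarith⟩
    rw [← this] at base
    simpa using base.step ⟨ht₀.le, ht₁⟩

-- Euclid's algorithm for `(x, q)` reads off the digits of `α` in reverse order.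
lemma isTail_of_mul_add_eq {p p' : ℤ} (hx : 0 < x) (hxq : x < q) (hp : p ∈ Icc 0 (q : ℤ))
    (det : IsUnit (p * x - p' * q)) (ht : t ∈ Ioo (0 : ℝ) 1)
    (hα : α * (q + x * t) = p + p' * t) : IsTail α x q t := by
  induction x using Nat.strong_induction_on generalizing q p p' t with
  | _ x ih =>
  rcases (Nat.succ_le_of_lt hx).eq_or_lt with rfl | one_lt_x
  · exact isTail_one_of_mul_add_eq hxq hp (by simpa using det) ht (by simpa using hα)
  obtain ⟨a, r, r_lt, rfl⟩ : ∃ a r, r < x ∧ q = a * x + r :=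
    ⟨q / x, q % x, Nat.mod_lt _ hx, (Nat.div_add_mod' q x).symm⟩
  have a_pos : (1 : ℝ) ≤ a := by exact_mod_cast Nat.pos_of_ne_zero (by rintro rfl; omega)
  have r_pos : 0 < r := by
    refine Nat.pos_of_ne_zero fun r_eq ↦ one_lt_x.ne' ?_
    have x_unit : IsUnit (x : ℤ) := by
      refine isUnit_of_mul_isUnit_right (x := p - p' * a) ?_
      simpa [r_eq, sub_mul, mul_assoc] using det
    simpa [Int.isUnit_iff, hx.ne'] using x_unit
  have hp' := mem_Icc_of_isUnit_mul_sub_mul (by omega) hp (by positivity) det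
  have det' : IsUnit (p' * r - (p - a * p') * x) := by
    convert det.neg using 1
    push_cast
    ring
  have hα' : α * (x + r * (1 / (a + t))) = p' + (p - a * p' : ℤ) * (1 / (a + t)) := by
    have : (0 : ℝ) < a + t := by linarith [ht.1]
    push_cast at hα ⊢
    field_simp
    linarith
  have tail_mem : 1 / (a + t) ∈ Ioo (0 : ℝ) 1 :=
    ⟨one_div_pos.mpr (by linarith [ht.1]),
      (div_lt_one (by linarith [ht.1])).mpr (by linarith [ht.1])⟩
  exact (ih r r_lt r_pos r_lt hp' det' tail_mem hα').step (Ioo_subset_Ico_self ht)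

end IsTail

/-- The irrational numbers of the unit interval for which `x` and `q` are the denominators of two
consecutive convergents. -/
def consecutiveDenominators (x q : ℕ) : Set ℝ :=
  {α ∈ unitIrrationals | ∃ n, qden (pq α) n = x ∧ qden (pq α) (n + 1) = q}

/-- The interval of length `1 / (q (q + x))` that ends at `x⁻¹ / q`, where `x⁻¹` is the inverse of
`x` modulo `q`. -/
noncomputable def inverseIoo (x q : ℕ) : Set ℝ :=
  Ioo (((x : ZMod q)⁻¹).val / q - 1 / (q * (q + x))) (((x : ZMod q)⁻¹).val / q)

lemma mem_Ioo_iff_exists_tail {α p p' q x : ℝ} (hq : 0 < q) (hx : 0 < x)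
    (det : p * x - p' * q = 1) :
    α ∈ Ioo (p / q - 1 / (q * (q + x))) (p / q) ↔
      ∃ t ∈ Ioo (0 : ℝ) 1, α * (q + x * t) = p + p' * t := by
  have left_eq : p / q - 1 / (q * (q + x)) = (p + p') / (q + x) := by
    field_simp
    linear_combination det
  rw [left_eq, mem_Ioo, div_lt_iff₀ (by positivity), lt_div_iff₀ hq]
  constructor
  · rintro ⟨h₁, h₂⟩
    have pos : 0 < α * x - p' := by linarith
    refine ⟨(p - α * q) / (α * x - p'),
      ⟨div_pos (by linarith) pos, (div_lt_one pos).mpr (by linarith)⟩, ?_⟩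
    field_simp
    ring
  · rintro ⟨t, ⟨ht₀, ht₁⟩, hα⟩
    have key : (α * x - p') * (q + x * t) = 1 := by linear_combination x * hα + det
    have pos : 0 < α * x - p' := by
      refine pos_of_mul_pos_left (b := q + x * t) ?_ (by positivity)
      rw [key]
      exact one_pos
    constructor <;> nlinarith

section ConsecutiveDenominators

variable {x q : ℕ} {α : ℝ}

lemma coprime_of_mem_consecutiveDenominators (h : α ∈ consecutiveDenominators x q) :
    q.Coprime x := by
  obtain ⟨-, n, rfl, rfl⟩ := h
  rw [← Nat.isCoprime_iff_coprime]
  rcases neg_one_pow_eq_or ℤ n with sign | sign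
  · exact ⟨-pnum (pq α) n, pnum (pq α) (n + 1), by
      linear_combination pnum_mul_qden_sub (pq α) n + sign⟩
  · exact ⟨pnum (pq α) n, -pnum (pq α) (n + 1), by
      linear_combination -pnum_mul_qden_sub (pq α) n - sign⟩

lemma inv_val_eq_of_mul_sub_mul_eq_one {p : ℕ} {p' : ℤ} (hq : 1 < q) (hp : p ≤ q)
    (det : (p : ℤ) * x - p' * q = 1) : ((x : ZMod q)⁻¹).val = p := by
  have p_ne : p ≠ q := by
    rintro rfl
    have : (p : ℤ) ∣ 1 := ⟨x - p', by linear_combination -det⟩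
    exact hq.ne' (by exact_mod_cast Int.eq_one_of_dvd_one (by positivity) this)
  have mul_eq_one : (x : ZMod q) * p = 1 := by
    have := congrArg (Int.cast : ℤ → ZMod q) det
    simpa [mul_comm] using this
  rw [ZMod.inv_eq_of_mul_eq_one _ _ _ mul_eq_one, ZMod.val_natCast_of_lt (by omega)]

lemma exists_inv_val_mul_sub_mul_eq_one (hq : 1 < q) (hx : q.Coprime x) :
    ∃ p' : ℤ, (((x : ZMod q)⁻¹).val : ℤ) * x - p' * q = 1 := by
  have : NeZero q := ⟨by omega⟩
  obtain ⟨p', hp'⟩ : (q : ℤ) ∣ ((x : ZMod q)⁻¹).val * x - 1 := by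
    rw [← ZMod.intCast_zmod_eq_zero_iff_dvd]
    push_cast
    rw [ZMod.natCast_zmod_val, mul_comm, ZMod.coe_mul_inv_eq_one _ hx.symm, sub_self]
  exact ⟨p', by linear_combination hp'⟩

lemma mem_inverseIoo_of_mul_add_eq {p : ℕ} {p' : ℤ} {t : ℝ} (hx : 0 < x) (hxq : x < q)
    (hp : p ≤ q) (det : (p : ℤ) * x - p' * q = 1) (ht : t ∈ Ioo (0 : ℝ) 1)
    (hα : α * (q + x * t) = p + p' * t) : α ∈ inverseIoo x q := by
  rw [inverseIoo, inv_val_eq_of_mul_sub_mul_eq_one (by omega) hp det,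
    mem_Ioo_iff_exists_tail (p' := p') (by exact_mod_cast hx.trans hxq) (by exact_mod_cast hx)
      (by exact_mod_cast det)]
  exact ⟨t, ht, hα⟩

lemma mem_inverseIoo_or_of_mem_consecutiveDenominators (hx : 0 < x) (hxq : x < q)
    (h : α ∈ consecutiveDenominators x q) : α ∈ inverseIoo x q ∨ 1 - α ∈ inverseIoo x q := by
  obtain ⟨hα, n, rfl, rfl⟩ := h
  have det := pnum_mul_qden_sub (pq α) n
  have tail := mul_qden_add_qden_mul hα n
  have ht := (iterate_gaussMap_mem_unitIrrationals hα (n + 1)).1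
  have le := pnum_le_qden (pq_pos hα) (n + 1)
  rcases neg_one_pow_eq_or ℤ n with sign | sign <;> rw [sign] at det
  · exact .inl (mem_inverseIoo_of_mul_add_eq hx hxq le det ht tail)
  · refine .inr (mem_inverseIoo_of_mul_add_eq (p := qden (pq α) (n + 1) - pnum (pq α) (n + 1))
      (p' := qden (pq α) n - pnum (pq α) n) hx hxq (Nat.sub_le _ _) ?_ ht ?_)
    · push_cast [le]
      linear_combination -det
    · push_cast [le]
      linear_combination -tail

lemma one_le_inv_val (hq : 1 < q) (hqx : q.Coprime x) : 1 ≤ ((x : ZMod q)⁻¹).val := by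
  obtain ⟨p', det⟩ := exists_inv_val_mul_sub_mul_eq_one hq hqx
  refine Nat.one_le_iff_ne_zero.mpr fun h ↦ hq.ne' ?_
  rw [h] at det
  have : (q : ℤ) ∣ 1 := ⟨-p', by linear_combination -det⟩
  exact_mod_cast Int.eq_one_of_dvd_one (by positivity) this

lemma one_div_mul_add_lt_one_div (hx : 0 < x) (hxq : x < q) :
    1 / (q * (q + x) : ℝ) < 1 / (2 * q) := by
  have hx' : (1 : ℝ) ≤ x := by exact_mod_cast hx
  have hq' : (x : ℝ) + 1 ≤ q := by exact_mod_cast hxq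
  exact one_div_lt_one_div_of_lt (by linarith) (by nlinarith)

lemma inverseIoo_subset_Ioo (hx : 0 < x) (hxq : x < q) (hqx : q.Coprime x) :
    inverseIoo x q ⊆ Ioo 0 1 := by
  have : NeZero q := ⟨by omega⟩
  have q_pos : (0 : ℝ) < q := by exact_mod_cast hx.trans hxq
  have one_le : (1 : ℝ) ≤ ((x : ZMod q)⁻¹).val := by
    exact_mod_cast one_le_inv_val (by omega) hqx
  refine Ioo_subset_Ioo ?_ ((div_le_one q_pos).mpr (by exact_mod_cast (ZMod.val_lt _).le))
  rw [sub_nonneg]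
  calc 1 / (q * (q + x) : ℝ) ≤ 1 / (2 * q) := (one_div_mul_add_lt_one_div hx hxq).le
    _ ≤ 1 / q := one_div_le_one_div_of_le q_pos (by linarith)
    _ ≤ ((x : ZMod q)⁻¹).val / q := by gcongr

lemma exists_isTail_of_mem_inverseIoo (hx : 0 < x) (hxq : x < q) (hqx : q.Coprime x)
    (h : α ∈ inverseIoo x q ∨ 1 - α ∈ inverseIoo x q) : ∃ t, IsTail α x q t := by
  have : NeZero q := ⟨by omega⟩
  obtain ⟨p', det⟩ := exists_inv_val_mul_sub_mul_eq_one (by omega) hqx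
  have lt := ZMod.val_lt (x : ZMod q)⁻¹
  have tail_of_mem {β : ℝ} : β ∈ inverseIoo x q → ∃ t ∈ Ioo (0 : ℝ) 1,
      β * (q + x * t) = ((x : ZMod q)⁻¹).val + p' * t :=
    (mem_Ioo_iff_exists_tail (by exact_mod_cast hx.trans hxq) (by exact_mod_cast hx)
      (by exact_mod_cast det)).mp
  rcases h with h | h <;> obtain ⟨t, ht, h_tail⟩ := tail_of_mem h <;> refine ⟨t, ?_⟩
  · exact isTail_of_mul_add_eq (p := ((x : ZMod q)⁻¹).val) hx hxq
      ⟨by positivity, by exact_mod_cast lt.le⟩ (det ▸ isUnit_one) ht (by exact_mod_cast h_tail)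
  · refine isTail_of_mul_add_eq (p := q - ((x : ZMod q)⁻¹).val) (p' := x - p') hx hxq
      ⟨by omega, by omega⟩ ?_ ht ?_
    · convert (isUnit_one (M := ℤ)).neg using 1
      linear_combination -det
    · push_cast
      linear_combination -h_tail

lemma mem_consecutiveDenominators_iff (hx : 0 < x) (hxq : x < q) (hqx : q.Coprime x) :
    α ∈ consecutiveDenominators x q ↔
      (α ∈ inverseIoo x q ∨ 1 - α ∈ inverseIoo x q) ∧ Irrational α := by
  refine ⟨fun h ↦ ⟨mem_inverseIoo_or_of_mem_consecutiveDenominators hx hxq h, h.1.2⟩,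
    fun ⟨h, irrational⟩ ↦ ?_⟩
  have mem_Ioo : α ∈ Ioo 0 1 := by
    rcases h with h | h
    · exact inverseIoo_subset_Ioo hx hxq hqx h
    · simpa using Ioo.one_sub_mem (inverseIoo_subset_Ioo hx hxq hqx h)
  obtain ⟨t, n, hn_x, hn_q, -⟩ := exists_isTail_of_mem_inverseIoo hx hxq hqx h
  exact ⟨⟨mem_Ioo, irrational⟩, n, hn_x, hn_q⟩

end ConsecutiveDenominators

/-! ### Gauss measure of sets of consecutive denominators -/

/-- The density of the Gauss measure on the unit interval. -/
noncomputable def gaussDensity (x : ℝ) : ℝ := 1 / (Real.log 2 * (1 + x))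

section GaussDensity

variable {c d w x y : ℝ}

lemma gaussDensity_nonneg (hx : 0 ≤ x) : 0 ≤ gaussDensity x := by
  have := Real.log_pos one_lt_two
  unfold gaussDensity
  positivity

lemma continuousOn_gaussDensity : ContinuousOn gaussDensity (Ici 0) := by
  refine continuousOn_const.div (by fun_prop) fun x hx ↦ ?_
  have := Real.log_pos one_lt_two
  have := mem_Ici.mp hx
  positivity

lemma intervalIntegrable_gaussDensity (hc : 0 ≤ c) (hcd : c ≤ d) :
    IntervalIntegrable gaussDensity volume c d := by
  refine (continuousOn_gaussDensity.mono ?_).intervalIntegrable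
  rw [uIcc_of_le hcd]
  exact fun x hx ↦ hc.trans hx.1

lemma integral_gaussDensity : ∫ x in (0 : ℝ)..1, gaussDensity x = 1 := by
  have factor (x : ℝ) : gaussDensity x = (Real.log 2)⁻¹ * (1 + x)⁻¹ := by
    rw [gaussDensity, one_div, mul_inv]
  simp_rw [factor]
  rw [intervalIntegral.integral_const_mul, intervalIntegral.integral_comp_add_left (fun x ↦ x⁻¹),
    integral_inv (by norm_num)]
  norm_num [(Real.log_pos one_lt_two).ne']

lemma abs_gaussDensity_sub_le (hx : 0 ≤ x) (hy : 0 ≤ y) :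
    |gaussDensity x - gaussDensity y| ≤ 2 * |x - y| := by
  have log_two : (1 : ℝ) / 2 ≤ Real.log 2 := by linarith [Real.log_two_gt_d9]
  have diff : gaussDensity x - gaussDensity y =
      1 / (Real.log 2 * ((1 + x) * (1 + y))) * (y - x) := by
    unfold gaussDensity
    field_simp
    ring
  rw [diff, abs_mul, abs_sub_comm y x, abs_of_nonneg (by positivity)]
  gcongr
  rw [div_le_iff₀ (by positivity)]
  nlinarith [mul_nonneg hx hy]

lemma gaussMeasure_absolutelyContinuous : gaussMeasure ≪ volume :=
  (withDensity_absolutelyContinuous _ _).trans Measure.absolutelyContinuous_restrict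

lemma gaussMeasure_Ioo (hc : 0 ≤ c) (hcd : c ≤ d) (hd : d ≤ 1) :
    gaussMeasure (Ioo c d) = ENNReal.ofReal (∫ x in c..d, gaussDensity x) := by
  rw [gaussMeasure, withDensity_apply _ measurableSet_Ioo,
    Measure.restrict_restrict measurableSet_Ioo, inter_eq_left.mpr (Ioo_subset_Ioo hc hd),
    intervalIntegral.integral_of_le hcd, integral_Ioc_eq_integral_Ioo,
    ofReal_integral_eq_lintegral_ofReal]
  · rfl
  · exact (intervalIntegrable_iff_integrableOn_Ioo_of_le hcd).mp
      (intervalIntegrable_gaussDensity hc hcd)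
  · filter_upwards [ae_restrict_mem measurableSet_Ioo] with x hx
    exact gaussDensity_nonneg (hc.trans hx.1.le)

instance isProbabilityMeasure_gaussMeasure : IsProbabilityMeasure gaussMeasure := by
  constructor
  have eq_Ioo : gaussMeasure univ = gaussMeasure (Ioo 0 1) := by
    simp [gaussMeasure, withDensity_apply]
  rw [eq_Ioo, gaussMeasure_Ioo le_rfl zero_le_one le_rfl, integral_gaussDensity, ENNReal.ofReal_one]

lemma compl_setOf_irrational : {α : ℝ | Irrational α}ᶜ = range ((↑) : ℚ → ℝ) := by
  ext
  simp [Irrational]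

lemma measurableSet_irrational : MeasurableSet {α : ℝ | Irrational α} := by
  rw [← MeasurableSet.compl_iff, compl_setOf_irrational]
  exact (countable_range _).measurableSet

lemma ae_irrational {μ : Measure ℝ} (hμ : μ ≪ volume) : ∀ᵐ α ∂μ, Irrational α := by
  refine hμ.ae_le (mem_ae_iff.mpr ?_)
  change volume {α : ℝ | Irrational α}ᶜ = 0
  rw [compl_setOf_irrational]
  exact (countable_range _).measure_zero _

lemma ae_mem_unitIrrationals : ∀ᵐ α ∂gaussMeasure, α ∈ unitIrrationals := by
  have mem_Ioo : ∀ᵐ α ∂gaussMeasure, α ∈ Ioo (0 : ℝ) 1 :=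
    (withDensity_absolutelyContinuous _ _).ae_le (ae_restrict_mem measurableSet_Ioo)
  filter_upwards [mem_Ioo, ae_irrational gaussMeasure_absolutelyContinuous] with α h₁ h₂
  exact ⟨h₁, h₂⟩

lemma abs_gaussMeasure_Ioo_sub_le (hc : 0 ≤ c) (hcd : c ≤ d) (hd : d ≤ 1) (hw : w ∈ Icc c d) :
    |gaussMeasure.real (Ioo c d) - gaussDensity w * (d - c)| ≤ 2 * (d - c) ^ 2 := by
  have integral_nonneg : 0 ≤ ∫ x in c..d, gaussDensity x :=
    intervalIntegral.integral_nonneg hcd fun x hx ↦ gaussDensity_nonneg (hc.trans hx.1)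
  have diff : (∫ x in c..d, gaussDensity x) - gaussDensity w * (d - c) =
      ∫ x in c..d, gaussDensity x - gaussDensity w := by
    rw [intervalIntegral.integral_sub (intervalIntegrable_gaussDensity hc hcd) (by simp)]
    simp [mul_comm]
  rw [Measure.real, gaussMeasure_Ioo hc hcd hd, ENNReal.toReal_ofReal integral_nonneg, diff]
  have bound : ∀ x ∈ uIoc c d, ‖gaussDensity x - gaussDensity w‖ ≤ 2 * (d - c) := by
    intro x hx
    rw [uIoc_of_le hcd] at hx
    refine (abs_gaussDensity_sub_le (by linarith [hx.1]) (by linarith [hw.1])).trans ?_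
    gcongr
    rw [abs_le]
    constructor <;> linarith [hx.1, hx.2, hw.1, hw.2]
  calc _ ≤ 2 * (d - c) * |d - c| := intervalIntegral.norm_integral_le_of_norm_le_const bound
    _ = 2 * (d - c) ^ 2 := by rw [abs_of_nonneg (sub_nonneg.mpr hcd)]; ring

end GaussDensity

/-- The density of the Gauss measure, symmetrised under `v ↦ 1 - v`. -/
noncomputable def symmDensity (v : ℝ) : ℝ := gaussDensity v + gaussDensity (1 - v)

section SymmDensity

lemma symmDensity_nonneg {v : ℝ} (hv : v ∈ Icc (0 : ℝ) 1) : 0 ≤ symmDensity v :=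
  add_nonneg (gaussDensity_nonneg hv.1) (gaussDensity_nonneg (sub_nonneg.mpr hv.2))

lemma symmDensity_zero : symmDensity 0 = symmDensity 1 := by
  simp [symmDensity, add_comm]

lemma continuousOn_symmDensity : ContinuousOn symmDensity (Icc 0 1) :=
  (continuousOn_gaussDensity.mono fun _ hv ↦ hv.1).add
    (continuousOn_gaussDensity.comp (by fun_prop) fun _ hv ↦ sub_nonneg.mpr hv.2)

lemma integral_symmDensity : ∫ v in (0 : ℝ)..1, symmDensity v = 2 := by
  have integrable := intervalIntegrable_gaussDensity le_rfl zero_le_one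
  unfold symmDensity
  rw [intervalIntegral.integral_add integrable
      (by simpa using (integrable.comp_sub_left 1).symm),
    intervalIntegral.integral_comp_sub_left, sub_self, sub_zero, integral_gaussDensity]
  norm_num

end SymmDensity

section ConsecutiveDenominators

variable {x q : ℕ}

lemma consecutiveDenominators_eq (hx : 0 < x) (hxq : x < q) (hqx : q.Coprime x) :
    consecutiveDenominators x q =
      (inverseIoo x q ∪ (1 - ·) ⁻¹' inverseIoo x q) ∩ {α | Irrational α} := by
  ext α
  exact mem_consecutiveDenominators_iff hx hxq hqx

lemma measurableSet_consecutiveDenominators (hx : 0 < x) (hxq : x < q) (hqx : q.Coprime x) :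
    MeasurableSet (consecutiveDenominators x q) := by
  rw [consecutiveDenominators_eq hx hxq hqx]
  exact (measurableSet_Ioo.union (measurableSet_Ioo.preimage (by fun_prop))).inter
    measurableSet_irrational

lemma disjoint_inverseIoo_preimage_one_sub (hx : 0 < x) (hxq : x < q) :
    Disjoint (inverseIoo x q) ((1 - ·) ⁻¹' inverseIoo x q) := by
  rw [Set.disjoint_left]
  rintro α ⟨h₁, h₂⟩ ⟨h₃, h₄⟩
  have q_pos : (0 : ℝ) < q := by exact_mod_cast hx.trans hxq
  have length := one_div_mul_add_lt_one_div hx hxq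
  set v := ((x : ZMod q)⁻¹).val
  rcases le_or_gt (2 * v) q with h | h
  · have : 2 * (v / q : ℝ) ≤ 1 := by
      rw [← mul_div_assoc, div_le_one q_pos]
      exact_mod_cast h
    linarith
  · have h' : (q : ℝ) + 1 ≤ 2 * v := by exact_mod_cast h
    have : 1 + 2 * (1 / (2 * q) : ℝ) ≤ 2 * (v / q : ℝ) := by
      field_simp
      linarith
    linarith

lemma abs_gaussMeasure_consecutiveDenominators_sub_le (hx : 0 < x) (hxq : x < q)
    (hqx : q.Coprime x) :
    |gaussMeasure.real (consecutiveDenominators x q) -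
      symmDensity (((x : ZMod q)⁻¹).val / q) * (1 / (q * (q + x)))| ≤ 4 / q ^ 4 := by
  have q_pos : (0 : ℝ) < q := by exact_mod_cast hx.trans hxq
  have subset := inverseIoo_subset_Ioo hx hxq hqx
  rw [measureReal_def, consecutiveDenominators_eq hx hxq hqx,
    measure_inter_conull (ae_irrational gaussMeasure_absolutelyContinuous), ← measureReal_def,
    measureReal_union (disjoint_inverseIoo_preimage_one_sub hx hxq)
      (measurableSet_Ioo.preimage (by fun_prop)), symmDensity]
  rw [inverseIoo] at subset ⊢
  rw [preimage_const_sub_Ioo]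
  have δ_pos : 0 < 1 / (q * (q + x) : ℝ) := by positivity
  have δ_le : 1 / (q * (q + x) : ℝ) ≤ 1 / q ^ 2 :=
    one_div_le_one_div_of_le (by positivity) (by nlinarith [x.cast_nonneg (α := ℝ)])
  set δ : ℝ := 1 / (q * (q + x))
  set u : ℝ := ((x : ZMod q)⁻¹).val / q
  obtain ⟨left, right⟩ := (Ioo_subset_Ioo_iff (by linarith)).mp subset
  have below := abs_gaussMeasure_Ioo_sub_le left (by linarith) right
    (right_mem_Icc.mpr (by linarith))
  have above := abs_gaussMeasure_Ioo_sub_le (c := 1 - u) (d := 1 - (u - δ)) (by linarith)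
    (by linarith) (by linarith) (left_mem_Icc.mpr (by linarith))
  calc |_| = |(gaussMeasure.real (Ioo (u - δ) u) - gaussDensity u * (u - (u - δ))) +
        (gaussMeasure.real (Ioo (1 - u) (1 - (u - δ))) -
          gaussDensity (1 - u) * (1 - (u - δ) - (1 - u)))| := by ring_nf
    _ ≤ 2 * (u - (u - δ)) ^ 2 + 2 * (1 - (u - δ) - (1 - u)) ^ 2 :=
      (abs_add_le _ _).trans (add_le_add below above)
    _ = 4 * δ ^ 2 := by ring
    _ ≤ 4 * (1 / q ^ 2) ^ 2 := by gcongr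
    _ = 4 / q ^ 4 := by ring

end ConsecutiveDenominators

/-- The numbers `x < q` prime to `q` with `l < x / q < r`. -/
noncomputable def coprimeRatios (l r : ℝ) (q : ℕ) : Finset ℕ :=
  {x ∈ Finset.range q | q.Coprime x ∧ (x / q : ℝ) ∈ Ioo l r}

section CoprimeRatios

variable {a b l r : ℝ}

lemma mem_coprimeRatios {q x : ℕ} :
    x ∈ coprimeRatios l r q ↔ x < q ∧ q.Coprime x ∧ (x / q : ℝ) ∈ Ioo l r := by
  rw [coprimeRatios, Finset.mem_filter, Finset.mem_range]

lemma pos_of_mem_coprimeRatios (hl : 0 < l) {q x : ℕ} (hx : x ∈ coprimeRatios l r q) : 0 < x := by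
  rcases x.eq_zero_or_pos with rfl | pos
  · have := (mem_coprimeRatios.mp hx).2.2.1
    simp only [Nat.cast_zero, zero_div] at this
    linarith
  · exact pos

lemma inverseSum_indicator (w H : ℝ → ℝ) (q : ℕ) :
    inverseSum q ((Ioo l r).indicator w) H =
      ∑ x ∈ coprimeRatios l r q, w (x / q) * H (((x : ZMod q)⁻¹).val / q) := by
  rw [inverseSum, coprimeRatios, ← Finset.filter_filter,
    Finset.sum_filter (fun x : ℕ ↦ (x / q : ℝ) ∈ _)]
  refine Finset.sum_congr rfl fun x _ ↦ ?_
  rw [indicator_apply, ite_mul, zero_mul]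

lemma abs_mul_sum_gaussMeasure_sub_le (hl : 0 < l) (q : ℕ) :
    |q * ∑ x ∈ coprimeRatios l r q, gaussMeasure.real (consecutiveDenominators x q) -
      inverseSum q ((Ioo l r).indicator fun u ↦ 1 / (1 + u)) symmDensity / q| ≤ 4 / q ^ 2 := by
  rcases q.eq_zero_or_pos with rfl | hq
  · simp
  have q_pos : (0 : ℝ) < q := by exact_mod_cast hq
  rw [inverseSum_indicator, Finset.mul_sum, Finset.sum_div, ← Finset.sum_sub_distrib]
  have card_le : ((coprimeRatios l r q).card : ℝ) ≤ q := by
    exact_mod_cast (Finset.card_filter_le _ _).trans_eq (Finset.card_range q)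
  have term_le : ∀ x ∈ coprimeRatios l r q,
      |q * gaussMeasure.real (consecutiveDenominators x q) -
        1 / (1 + x / q) * symmDensity (((x : ZMod q)⁻¹).val / q) / q| ≤ 4 / q ^ 3 := by
    intro x hx
    obtain ⟨x_lt, coprime, -⟩ := mem_coprimeRatios.mp hx
    have approx := abs_gaussMeasure_consecutiveDenominators_sub_le
      (pos_of_mem_coprimeRatios hl hx) x_lt coprime
    calc |_| = |q * (gaussMeasure.real (consecutiveDenominators x q) -
          symmDensity (((x : ZMod q)⁻¹).val / q) * (1 / (q * (q + x))))| := by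
          congr 1
          field_simp
      _ ≤ q * (4 / q ^ 4) := by
        rw [abs_mul, abs_of_pos q_pos]
        gcongr
      _ = 4 / q ^ 3 := by field_simp
  calc |_| ≤ ∑ x ∈ coprimeRatios l r q, (4 / q ^ 3 : ℝ) :=
        (Finset.abs_sum_le_sum_abs _ _).trans (Finset.sum_le_sum term_le)
    _ = (coprimeRatios l r q).card * (4 / q ^ 3) := by rw [Finset.sum_const, nsmul_eq_mul]
    _ ≤ q * (4 / q ^ 3) := by gcongr
    _ = 4 / q ^ 2 := by field_simp

lemma integral_one_div_one_add (hl : -1 < l) (hlr : l ≤ r) :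
    ∫ u in l..r, 1 / (1 + u) = Real.log ((1 + r) / (1 + l)) := by
  rw [intervalIntegral.integral_comp_add_left (fun u ↦ 1 / u), integral_one_div_of_pos] <;> linarith

lemma integral_indicator_one_div_one_add (hl : 0 < l) (hlr : l ≤ r) (hr : r < 1) :
    ∫ u in (0 : ℝ)..1, (Ioo l r).indicator (fun u ↦ 1 / (1 + u)) u =
      Real.log ((1 + r) / (1 + l)) := by
  rw [intervalIntegral.integral_of_le zero_le_one, setIntegral_indicator measurableSet_Ioo,
    inter_eq_right.mpr (Ioo_subset_Ioc_self.trans (Ioc_subset_Ioc hl.le hr.le)),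
    ← integral_Ioc_eq_integral_Ioo, ← intervalIntegral.integral_of_le hlr,
    integral_one_div_one_add (by linarith) hlr]

lemma tendsto_mul_sum_gaussMeasure_sub (hl : 0 < l) (hlr : l ≤ r) (hr : r < 1) :
    Tendsto (fun q : ℕ ↦
      q * ∑ x ∈ coprimeRatios l r q, gaussMeasure.real (consecutiveDenominators x q) -
        2 * Real.log ((1 + r) / (1 + l)) * (q.totient / q)) atTop (𝓝 0) := by
  have w_cont : ContinuousOn (fun u : ℝ ↦ 1 / (1 + u)) (Icc 0 1) :=
    continuousOn_const.div (by fun_prop) fun u hu ↦ by linarith [hu.1]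
  have main := tendsto_inverseError_indicator hl hr w_cont
    (fun u hu ↦ one_div_nonneg.mpr (by linarith [hu.1])) continuousOn_symmDensity symmDensity_zero
    fun _ ↦ symmDensity_nonneg
  have error_bound : Tendsto (fun q : ℕ ↦ (4 / q ^ 2 : ℝ)) atTop (𝓝 0) := by
    simpa using tendsto_const_div_pow (4 : ℝ) 2 two_ne_zero
  have error := squeeze_zero_norm
    (fun q ↦ (Real.norm_eq_abs _).trans_le (abs_mul_sum_gaussMeasure_sub_le (r := r) hl q))
    error_bound
  refine (add_zero (0 : ℝ) ▸ error.add main).congr fun q ↦ ?_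
  rw [inverseError, integral_indicator_one_div_one_add hl hlr hr, integral_symmDensity]
  ring

lemma tendsto_sum_sum_gaussMeasure (ha : 0 < a) (hab : a < b) (hl : 0 < l) (hlr : l ≤ r)
    (hr : r < 1) :
    Tendsto (fun R : ℝ ↦ ∑ q ∈ natIoo (a * R) (b * R), ∑ x ∈ coprimeRatios l r q,
      gaussMeasure.real (consecutiveDenominators x q)) atTop
      (𝓝 (2 * Real.log ((1 + r) / (1 + l)) * (6 / Real.pi ^ 2 * Real.log (b / a)))) :=
  tendsto_sum_natIoo_of_tendsto ha hab (tendsto_mul_sum_gaussMeasure_sub hl hlr hr)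

end CoprimeRatios

/-! ### The law of the renewal pair -/

section NIndex

variable {α R : ℝ} {n : ℕ}

lemma lt_qden_nIndex (hα : α ∈ unitIrrationals) (R : ℝ) : R < qden (pq α) (nIndex α R) := by
  refine Nat.sInf_mem (s := {n | R < qden (pq α) n}) ?_
  obtain ⟨n, hn⟩ := exists_nat_gt R
  exact ⟨n, hn.trans_le (by exact_mod_cast le_qden (pq_pos hα) n)⟩

lemma qden_le_of_lt_nIndex (hn : n < nIndex α R) : qden (pq α) n ≤ R :=
  not_lt.mp (Nat.notMem_of_lt_sInf hn)

lemma nIndex_pos (hα : α ∈ unitIrrationals) (hR : 1 ≤ R) : 0 < nIndex α R := by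
  by_contra! h
  have lt := lt_qden_nIndex hα R
  simp only [Nat.le_zero.mp h, qden, Nat.cast_one] at lt
  linarith

lemma nIndex_eq_succ (hα : α ∈ unitIrrationals) (le : qden (pq α) n ≤ R)
    (lt : R < qden (pq α) (n + 1)) : nIndex α R = n + 1 := by
  refine le_antisymm (Nat.sInf_le lt) (Nat.succ_le_of_lt ?_)
  by_contra! h
  have : (qden (pq α) (nIndex α R) : ℝ) ≤ qden (pq α) n := by
    exact_mod_cast qden_mono (pq_pos hα) h
  linarith [lt_qden_nIndex hα R]

lemma qden_nIndex_of_mem_consecutiveDenominators {x q : ℕ} (h : α ∈ consecutiveDenominators x q)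
    (hx : x ≤ R) (hq : R < q) :
    qden (pq α) (nIndex α R) = q ∧ qden (pq α) (nIndex α R - 1) = x := by
  obtain ⟨hα, n, hn_x, hn_q⟩ := h
  rw [nIndex_eq_succ hα (hn_x ▸ hx) (hn_q ▸ hq)]
  exact ⟨hn_q, hn_x⟩

end NIndex

section Measurability

@[fun_prop]
lemma measurable_gaussMap : Measurable gaussMap := by
  unfold gaussMap
  fun_prop

@[fun_prop]
lemma measurable_pq (n : ℕ) : Measurable fun α ↦ pq α n :=
  Nat.measurable_floor.comp ((measurable_gaussMap.iterate (n - 1)).const_div 1)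

@[fun_prop]
lemma measurable_qden (n : ℕ) : Measurable fun α ↦ qden (pq α) n := by
  induction n using Nat.twoStepInduction with
  | zero => exact measurable_const
  | one => exact measurable_pq 1
  | more n ih ih' => exact ((measurable_pq (n + 2)).mul ih').add ih

lemma measurable_nIndex (R : ℝ) : Measurable fun α ↦ nIndex α R := by
  have lt_measurable (n : ℕ) : MeasurableSet {α | R < (qden (pq α) n : ℝ)} :=
    measurableSet_lt measurable_const (measurable_from_nat.comp (measurable_qden n))
  refine measurable_of_Ioi fun n ↦ ?_
  have preimage_eq : (fun α ↦ nIndex α R) ⁻¹' Ioi n =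
      (⋃ m, {α | R < (qden (pq α) m : ℝ)}) ∩ ⋂ m ∈ Iic n, {α | R < (qden (pq α) m : ℝ)}ᶜ := by
    ext α
    simp only [mem_preimage, mem_Ioi, mem_inter_iff, mem_iUnion, mem_iInter, mem_Iic]
    constructor
    · intro lt
      exact ⟨Nat.nonempty_of_pos_sInf (Nat.zero_lt_of_lt lt), fun m hm ↦
        Nat.notMem_of_lt_sInf (hm.trans_lt lt)⟩
    · rintro ⟨nonempty, notMem⟩
      by_contra! le
      exact notMem _ le (Nat.sInf_mem nonempty)
  rw [preimage_eq]
  exact (MeasurableSet.iUnion lt_measurable).inter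
    (.biInter (to_countable _) fun m _ ↦ (lt_measurable m).compl)

end Measurability

/-- The pair `(q_n / R, q_{n-1} / q_n)`, where `q_n` is the first denominator exceeding `R`. -/
noncomputable def renewalPair (R α : ℝ) : ℝ × ℝ :=
  (qden (pq α) (nIndex α R) / R, qden (pq α) (nIndex α R - 1) / qden (pq α) (nIndex α R))

lemma measurable_renewalPair (R : ℝ) : Measurable (renewalPair R) := by
  have at_index {f : ℕ → ℝ → ℕ} (hf : ∀ n, Measurable (f n)) :
      Measurable fun α ↦ (f (nIndex α R) α : ℝ) :=
    measurable_from_nat.comp ((measurable_from_prod_countable_left (f := fun p ↦ f p.2 p.1) hf).comp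
      (measurable_id.prodMk (measurable_nIndex R)))
  exact ((at_index measurable_qden).div_const R).prodMk
    ((at_index fun n ↦ measurable_qden (n - 1)).div (at_index measurable_qden))

section Rectangle

variable {a b l r R : ℝ}

lemma le_and_lt_of_mem (ha : 1 ≤ a) (hl : 0 < l) (hbr : b * r ≤ 1) (hR : 0 < R) {q x : ℕ}
    (hq : q ∈ natIoo (a * R) (b * R)) (hx : x ∈ coprimeRatios l r q) : x ≤ R ∧ R < q := by
  obtain ⟨lt_q, q_lt⟩ := (mem_natIoo (by positivity)).mp hq
  obtain ⟨-, -, l_lt, lt_r⟩ := mem_coprimeRatios.mp hx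
  have R_lt : R < q := by nlinarith
  refine ⟨?_, R_lt⟩
  have r_pos := hl.trans (l_lt.trans lt_r)
  calc (x : ℝ) ≤ r * q := ((div_lt_iff₀ (hR.trans R_lt)).mp lt_r).le
    _ ≤ r * (b * R) := by gcongr
    _ = b * r * R := by ring
    _ ≤ R := mul_le_of_le_one_left hR.le hbr

lemma renewalPair_mem_iff {α : ℝ} (hα : α ∈ unitIrrationals) (ha : 1 ≤ a) (hl : 0 < l)
    (hbr : b * r ≤ 1) (hR : 1 ≤ R) :
    renewalPair R α ∈ Ioo a b ×ˢ Ioo l r ↔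
      α ∈ ⋃ p ∈ (natIoo (a * R) (b * R)).sigma (coprimeRatios l r),
        consecutiveDenominators p.2 p.1 := by
  simp only [mem_iUnion, exists_prop]
  have R_pos : 0 < R := by linarith
  have aR_nonneg : 0 ≤ a * R := by positivity
  constructor
  · rintro ⟨⟨a_lt, lt_b⟩, ratio_mem⟩
    have pred_lt := Nat.sub_one_lt (nIndex_pos hα hR).ne'
    have h : α ∈ consecutiveDenominators (qden (pq α) (nIndex α R - 1))
        (qden (pq α) (nIndex α R)) := ⟨hα, _, rfl, by rw [Nat.sub_add_cancel (nIndex_pos hα hR)]⟩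
    have lt : (qden (pq α) (nIndex α R - 1) : ℝ) < qden (pq α) (nIndex α R) :=
      (qden_le_of_lt_nIndex pred_lt).trans_lt (lt_qden_nIndex hα R)
    refine ⟨⟨_, _⟩, Finset.mem_sigma.mpr ⟨?_, mem_coprimeRatios.mpr
      ⟨by exact_mod_cast lt, coprime_of_mem_consecutiveDenominators h, ratio_mem⟩⟩, h⟩
    exact (mem_natIoo aR_nonneg).mpr ⟨(lt_div_iff₀ R_pos).mp a_lt, (div_lt_iff₀ R_pos).mp lt_b⟩
  · rintro ⟨⟨q, x⟩, hp, h⟩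
    obtain ⟨hq, hx⟩ := Finset.mem_sigma.mp hp
    obtain ⟨x_le, lt_q⟩ := le_and_lt_of_mem ha hl hbr R_pos hq hx
    obtain ⟨eq_q, eq_x⟩ := qden_nIndex_of_mem_consecutiveDenominators h x_le lt_q
    rw [renewalPair, eq_q, eq_x]
    rw [mem_natIoo aR_nonneg, ← lt_div_iff₀ R_pos, ← div_lt_iff₀ R_pos] at hq
    exact ⟨hq, (mem_coprimeRatios.mp hx).2.2⟩

lemma gaussMeasure_renewalPair_preimage (ha : 1 ≤ a) (hl : 0 < l) (hbr : b * r ≤ 1) (hR : 1 ≤ R) :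
    gaussMeasure.real (renewalPair R ⁻¹' (Ioo a b ×ˢ Ioo l r)) =
      ∑ q ∈ natIoo (a * R) (b * R), ∑ x ∈ coprimeRatios l r q,
        gaussMeasure.real (consecutiveDenominators x q) := by
  have ae_eq : renewalPair R ⁻¹' (Ioo a b ×ˢ Ioo l r) =ᵐ[gaussMeasure]
      ⋃ p ∈ (natIoo (a * R) (b * R)).sigma (coprimeRatios l r),
        consecutiveDenominators p.2 p.1 := by
    filter_upwards [ae_mem_unitIrrationals] with α hα
    exact propext (renewalPair_mem_iff hα ha hl hbr hR)
  have bounds {p : Σ _ : ℕ, ℕ} (hp : p ∈ (natIoo (a * R) (b * R)).sigma (coprimeRatios l r)) :=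
    le_and_lt_of_mem ha hl hbr (by linarith) (Finset.mem_sigma.mp hp).1 (Finset.mem_sigma.mp hp).2
  rw [measureReal_congr ae_eq, measureReal_biUnion_finset, Finset.sum_sigma]
  · rintro ⟨q, x⟩ hp ⟨q', x'⟩ hp' ne
    refine Set.disjoint_left.mpr fun α h h' ↦ ne ?_
    obtain ⟨rfl, rfl⟩ := qden_nIndex_of_mem_consecutiveDenominators h (bounds hp).1 (bounds hp).2
    obtain ⟨rfl, rfl⟩ :=
      qden_nIndex_of_mem_consecutiveDenominators h' (bounds hp').1 (bounds hp').2
    rfl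
  · rintro ⟨q, x⟩ hp
    have hx := (Finset.mem_sigma.mp hp).2
    obtain ⟨x_lt, coprime, -⟩ := mem_coprimeRatios.mp hx
    exact measurableSet_consecutiveDenominators (pos_of_mem_coprimeRatios hl hx) x_lt coprime

lemma tendsto_gaussMeasure_renewalPair_preimage (ha : 1 ≤ a) (hab : a < b) (hl : 0 < l)
    (hlr : l < r) (hbr : b * r ≤ 1) :
    Tendsto (fun R ↦ gaussMeasure.real (renewalPair R ⁻¹' (Ioo a b ×ˢ Ioo l r))) atTop
      (𝓝 (12 / Real.pi ^ 2 * Real.log (b / a) * Real.log ((1 + r) / (1 + l)))) := by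
  have limit := tendsto_sum_sum_gaussMeasure (by linarith) hab hl hlr.le
    (show r < 1 by nlinarith)
  have eq : 12 / Real.pi ^ 2 * Real.log (b / a) * Real.log ((1 + r) / (1 + l)) =
      2 * Real.log ((1 + r) / (1 + l)) * (6 / Real.pi ^ 2 * Real.log (b / a)) := by ring
  rw [eq]
  refine limit.congr' ?_
  filter_upwards [eventually_ge_atTop 1] with R hR
  exact (gaussMeasure_renewalPair_preimage ha hl hbr hR).symm

end Rectangle

/-! ### The law of the limiting pair -/

lemma hasSum_neg_one_pow_div_add_one_sq :
    HasSum (fun n : ℕ ↦ (-1 : ℝ) ^ n / (n + 1) ^ 2) (Real.pi ^ 2 / 12) := by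
  have zeta : HasSum (fun n : ℕ ↦ 1 / ((n : ℝ) + 1) ^ 2) (Real.pi ^ 2 / 6) := by
    simpa using (hasSum_nat_add_iff' 1).mpr hasSum_zeta_two
  have odd_terms :
      HasSum (fun k : ℕ ↦ 1 / (((2 * k + 1 : ℕ) : ℝ) + 1) ^ 2) (Real.pi ^ 2 / 6 / 4) :=
    (zeta.div_const 4).congr_fun fun k ↦ by
      push_cast
      field_simp
      ring
  have zeta_sub : HasSum (fun n : ℕ ↦ 1 / ((n : ℝ) + 1) ^ 2 - (1 - (-1) ^ n) / (n + 1) ^ 2)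
      (Real.pi ^ 2 / 6 - (0 + 2 * (Real.pi ^ 2 / 6 / 4))) := by
    refine zeta.sub (HasSum.even_add_odd ?_ ?_)
    · simp
    · refine (odd_terms.mul_left 2).congr_fun fun k ↦ ?_
      rw [pow_succ, pow_mul]
      norm_num
      ring
  convert zeta_sub using 1
  · funext n
    ring
  · ring

lemma integral_Ioi_rpow_neg_add_two (n : ℕ) :
    ∫ y in Ioi (1 : ℝ), y ^ (-(n + 2 : ℝ)) = 1 / (n + 1) := by
  rw [integral_Ioi_rpow_of_lt (by linarith [n.cast_nonneg (α := ℝ)]) one_pos, Real.one_rpow]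
  have : -(n + 2 : ℝ) + 1 = -(n + 1) := by ring
  rw [this, neg_div_neg_eq]

lemma hasSum_one_div_mul_log_one_add_one_div {y : ℝ} (hy : 1 < y) :
    HasSum (fun n : ℕ ↦ (-1) ^ n / (n + 1) * y ^ (-(n + 2 : ℝ)))
      (1 / y * Real.log (1 + 1 / y)) := by
  have y_pos : 0 < y := one_pos.trans hy
  have abs_lt : |-(1 / y)| < 1 := by
    rw [abs_neg, abs_of_pos (by positivity)]
    exact (div_lt_one y_pos).mpr hy
  have series := (Real.hasSum_pow_div_log_of_abs_lt_one abs_lt).mul_left (-(1 / y))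
  rw [sub_neg_eq_add, neg_mul_neg] at series
  refine series.congr_fun fun n ↦ ?_
  have : y ^ (-(n + 2 : ℝ)) = (1 / y) ^ (n + 2) := by
    rw [Real.rpow_neg y_pos.le, one_div, inv_pow]
    norm_cast
  rw [this, neg_pow (1 / y)]
  ring

lemma integral_Ioi_one_div_mul_log :
    ∫ y in Ioi (1 : ℝ), 1 / y * Real.log (1 + 1 / y) = Real.pi ^ 2 / 12 := by
  have integrable (n : ℕ) (c : ℝ) : Integrable (fun y : ℝ ↦ c * y ^ (-(n + 2 : ℝ)))
      (volume.restrict (Ioi 1)) :=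
    (integrableOn_Ioi_rpow_of_lt (by linarith [n.cast_nonneg (α := ℝ)]) one_pos).const_mul c
  have integral_norm (n : ℕ) :
      ∫ y in Ioi (1 : ℝ), ‖(-1) ^ n / ((n : ℝ) + 1) * y ^ (-(n + 2 : ℝ))‖ =
        1 / ((n : ℝ) + 1) ^ 2 := by
    have norm_eq : ∀ y ∈ Ioi (1 : ℝ), ‖(-1) ^ n / ((n : ℝ) + 1) * y ^ (-(n + 2 : ℝ))‖ =
        1 / ((n : ℝ) + 1) * y ^ (-(n + 2 : ℝ)) := by
      intro y hy
      have y_pos : 0 < y := one_pos.trans hy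
      rw [norm_mul, norm_div, norm_pow, norm_neg, norm_one, one_pow, Real.norm_of_nonneg
        (by positivity), Real.norm_of_nonneg (by positivity)]
    rw [setIntegral_congr_fun measurableSet_Ioi norm_eq, integral_const_mul,
      integral_Ioi_rpow_neg_add_two]
    field_simp
  have summable : Summable fun n : ℕ ↦ 1 / ((n : ℝ) + 1) ^ 2 := by
    simpa using (summable_nat_add_iff 1).mpr hasSum_zeta_two.summable
  have series := hasSum_integral_of_summable_integral_norm (fun n ↦ integrable n _)
    (summable.congr fun n ↦ (integral_norm n).symm)
  simp only [integral_const_mul, integral_Ioi_rpow_neg_add_two] at series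
  rw [← setIntegral_congr_fun measurableSet_Ioi
    fun y hy ↦ (hasSum_one_div_mul_log_one_add_one_div hy).tsum_eq.symm] at series
  refine series.unique (hasSum_neg_one_pow_div_add_one_sq.congr_fun fun n ↦ ?_)
  field_simp

lemma setLIntegral_regionBetween {X : Type*} [MeasurableSpace X] {μ : Measure X} {f g : X → ℝ}
    {s : Set X} {F : X × ℝ → ENNReal} (hf : Measurable f) (hg : Measurable g)
    (hs : MeasurableSet s) (hF : Measurable F) :
    ∫⁻ p in regionBetween f g s, F p ∂(μ.prod volume) =
      ∫⁻ y in s, (∫⁻ u in Ioo (f y) (g y), F (y, u)) ∂μ := by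
  rw [← lintegral_indicator (measurableSet_regionBetween hf hg hs),
    lintegral_prod _ (hF.indicator (measurableSet_regionBetween hf hg hs)).aemeasurable,
    ← lintegral_indicator hs]
  refine lintegral_congr fun y ↦ ?_
  by_cases hy : y ∈ s
  · rw [indicator_of_mem hy, ← lintegral_indicator measurableSet_Ioo]
    exact lintegral_congr fun u ↦ indicator_eq_indicator (and_iff_right hy) rfl
  · simp [regionBetween, hy]

/-- The region `1 < y`, `0 < u < 1 / y` carrying the limit law of `renewalPair`: the product
`y u` stands for `q_{n - 1} / R ≤ 1`, where `n = n_R`. -/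
def renewalDomain : Set (ℝ × ℝ) := regionBetween (fun _ ↦ 0) (fun y ↦ 1 / y) (Ioi 1)

/-- The limit law of `renewalPair`. -/
noncomputable def renewalLimit : Measure (ℝ × ℝ) :=
  (volume.restrict renewalDomain).withDensity fun p ↦
    ENNReal.ofReal (12 / Real.pi ^ 2 * (1 / p.1)) * ENNReal.ofReal (1 / (1 + p.2))

lemma measurableSet_renewalDomain : MeasurableSet renewalDomain :=
  measurableSet_regionBetween measurable_const (by fun_prop) measurableSet_Ioi

lemma renewalLimit_absolutelyContinuous : renewalLimit ≪ volume :=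
  (withDensity_absolutelyContinuous _ _).trans Measure.restrict_le_self.absolutelyContinuous

lemma renewalLimit_compl_renewalDomain : renewalLimit renewalDomainᶜ = 0 := by
  refine withDensity_absolutelyContinuous _ _ ?_
  rw [Measure.restrict_apply measurableSet_renewalDomain.compl, compl_inter_self, measure_empty]

lemma setLIntegral_Ioo_one_div_one_add {l r : ℝ} (hl : -1 < l) (hlr : l ≤ r) :
    ∫⁻ u in Ioo l r, ENNReal.ofReal (1 / (1 + u)) =
      ENNReal.ofReal (Real.log ((1 + r) / (1 + l))) := by
  have integrable : IntegrableOn (fun u : ℝ ↦ 1 / (1 + u)) (Ioo l r) :=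
    (ContinuousOn.integrableOn_Icc <| continuousOn_const.div (by fun_prop)
      fun u hu ↦ by linarith [hu.1]).mono_set Ioo_subset_Icc_self
  have nonneg : ∀ᵐ u ∂volume.restrict (Ioo l r), 0 ≤ 1 / (1 + u) :=
    (ae_restrict_mem measurableSet_Ioo).mono fun u hu ↦ one_div_nonneg.mpr (by linarith [hu.1])
  rw [← ofReal_integral_eq_lintegral_ofReal integrable nonneg, ← integral_Ioc_eq_integral_Ioo,
    ← intervalIntegral.integral_of_le hlr, integral_one_div_one_add hl hlr]

lemma renewalLimit_regionBetween {f g : ℝ → ℝ} {s : Set ℝ} (hf : Measurable f) (hg : Measurable g)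
    (hs : MeasurableSet s) (hs_gt : ∀ y ∈ s, 1 < y) (hf_nonneg : ∀ y ∈ s, 0 ≤ f y)
    (hfg : ∀ y ∈ s, f y ≤ g y) (hg_le : ∀ y ∈ s, g y ≤ 1 / y) :
    renewalLimit (regionBetween f g s) = ∫⁻ y in s,
      ENNReal.ofReal (12 / Real.pi ^ 2 * (1 / y * Real.log ((1 + g y) / (1 + f y)))) := by
  have measurable_region := measurableSet_regionBetween hf hg hs
  have subset : regionBetween f g s ⊆ renewalDomain :=
    fun p hp ↦ ⟨hs_gt _ hp.1, (hf_nonneg _ hp.1).trans_lt hp.2.1, hp.2.2.trans_le (hg_le _ hp.1)⟩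
  rw [renewalLimit, withDensity_apply _ measurable_region, Measure.restrict_restrict
    measurable_region, inter_eq_left.mpr subset, Measure.volume_eq_prod,
    setLIntegral_regionBetween hf hg hs (by fun_prop)]
  refine setLIntegral_congr_fun hs fun y hy ↦ ?_
  have y_pos : 0 < y := one_pos.trans (hs_gt y hy)
  change ∫⁻ u in Ioo (f y) (g y),
    ENNReal.ofReal (12 / Real.pi ^ 2 * (1 / y)) * ENNReal.ofReal (1 / (1 + u)) = _
  rw [lintegral_const_mul' _ _ ENNReal.ofReal_ne_top, setLIntegral_Ioo_one_div_one_add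
    (by linarith [hf_nonneg y hy]) (hfg y hy), ← ENNReal.ofReal_mul (by positivity), mul_assoc]

lemma renewalLimit_prod {a b l r : ℝ} (ha : 1 ≤ a) (hab : a ≤ b) (hl : 0 ≤ l) (hlr : l ≤ r)
    (hbr : b * r ≤ 1) :
    renewalLimit.real (Ioo a b ×ˢ Ioo l r) =
      12 / Real.pi ^ 2 * Real.log (b / a) * Real.log ((1 + r) / (1 + l)) := by
  have eq_region : Ioo a b ×ˢ Ioo l r = regionBetween (fun _ ↦ l) (fun _ ↦ r) (Ioo a b) := rfl
  have log_nonneg : 0 ≤ Real.log ((1 + r) / (1 + l)) :=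
    Real.log_nonneg ((one_le_div (by linarith)).mpr (by linarith))
  rw [measureReal_def, eq_region, renewalLimit_regionBetween measurable_const measurable_const
    measurableSet_Ioo]
  · rw [← integral_eq_lintegral_of_nonneg_ae]
    · rw [integral_const_mul, integral_mul_const, ← integral_Ioc_eq_integral_Ioo,
        ← intervalIntegral.integral_of_le hab, integral_one_div_of_pos] <;> linarith
    · refine (ae_restrict_mem measurableSet_Ioo).mono fun y hy ↦ ?_
      have y_pos : 0 < y := by linarith [hy.1]
      positivity
    · fun_prop
  · exact fun y hy ↦ ha.trans_lt hy.1
  · exact fun _ _ ↦ hl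
  · exact fun _ _ ↦ hlr
  · intro y hy
    have y_pos : 0 < y := by linarith [hy.1]
    rw [le_div_iff₀ y_pos]
    nlinarith [hy.2]

lemma renewalLimit_renewalDomain : renewalLimit renewalDomain = 1 := by
  have integral_eq : ∫ y in Ioi (1 : ℝ),
      12 / Real.pi ^ 2 * (1 / y * Real.log ((1 + 1 / y) / (1 + 0))) = 1 := by
    simp only [add_zero, div_one]
    rw [integral_const_mul, integral_Ioi_one_div_mul_log]
    field_simp
  have integrable : IntegrableOn (fun y : ℝ ↦
      12 / Real.pi ^ 2 * (1 / y * Real.log ((1 + 1 / y) / (1 + 0)))) (Ioi 1) :=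
    Integrable.of_integral_ne_zero (by rw [integral_eq]; exact one_ne_zero)
  rw [renewalDomain, renewalLimit_regionBetween measurable_const (by fun_prop) measurableSet_Ioi
    (fun _ ↦ id) (fun _ _ ↦ le_rfl) (fun y hy ↦ one_div_nonneg.mpr (by linarith [mem_Ioi.mp hy]))
    (fun _ _ ↦ le_rfl), ← ofReal_integral_eq_lintegral_ofReal integrable, integral_eq,
    ENNReal.ofReal_one]
  refine (ae_restrict_mem measurableSet_Ioi).mono fun y hy ↦ ?_
  have y_pos : 0 < y := one_pos.trans hy
  refine mul_nonneg (by positivity) (mul_nonneg (by positivity) (Real.log_nonneg ?_))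
  rw [add_zero, div_one]
  linarith [one_div_pos.mpr y_pos]

instance isProbabilityMeasure_renewalLimit : IsProbabilityMeasure renewalLimit :=
  ⟨by rw [← measure_inter_conull renewalLimit_compl_renewalDomain, univ_inter,
    renewalLimit_renewalDomain]⟩

/-! ### Convergence in law of the renewal pair -/

section OpenSets

variable {Ω ι : Type*} [TopologicalSpace Ω] [SecondCountableTopology Ω] [MeasurableSpace Ω]
  {S : Set (Set Ω)} {ν : Measure Ω} {G : Set Ω}

lemma exists_finset_lt_measure_biUnion (hG : ∀ x ∈ G, ∃ s ∈ S, s ∈ 𝓝 x ∧ s ⊆ G) {r : ENNReal}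
    (hr : r < ν G) :
    ∃ T : Finset (Set Ω), (∀ s ∈ T, s ∈ S) ∧ ⋃ s ∈ T, s ⊆ G ∧ r < ν (⋃ s ∈ T, s) := by
  classical
  choose! s s_mem s_nhds s_subset using hG
  obtain ⟨t, t_subset, t_countable, cover⟩ := TopologicalSpace.countable_cover_nhdsWithin
    fun x hx ↦ mem_nhdsWithin_of_mem_nhds (s_nhds x hx)
  have := t_countable.to_subtype
  have directed : Directed (· ⊆ ·) fun F : Finset t ↦ ⋃ x ∈ F, s x :=
    Monotone.directed_le fun _ _ h ↦ biUnion_subset_biUnion_left h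
  have lt_iSup : r < ⨆ F : Finset t, ν (⋃ x ∈ F, s x) := by
    rw [← directed.measure_iUnion, ← iUnion_eq_iUnion_finset fun x : t ↦ s x]
    exact hr.trans_le (measure_mono (by rwa [← biUnion_eq_iUnion t fun x _ ↦ s x]))
  obtain ⟨F, hF⟩ := lt_iSup_iff.mp lt_iSup
  refine ⟨F.image fun x : t ↦ s x, ?_, ?_, by rwa [Finset.set_biUnion_finset_image]⟩
  · exact Finset.forall_mem_image.mpr fun x _ ↦ s_mem x (t_subset x.2)
  · rw [Finset.set_biUnion_finset_image]
    exact iUnion₂_subset fun x _ ↦ s_subset x (t_subset x.2)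

lemma le_liminf_measure_of_tendsto_measureReal {μ : ι → Measure Ω} {l : Filter ι}
    [IsFiniteMeasure ν] [∀ i, IsFiniteMeasure (μ i)] (hS : IsPiSystem S)
    (hmeas : ∀ s ∈ S, MeasurableSet s)
    (hlim : ∀ s ∈ S, Tendsto (fun i ↦ (μ i).real s) l (𝓝 (ν.real s)))
    (hG : ∀ x ∈ G, ∃ s ∈ S, s ∈ 𝓝 x ∧ s ⊆ G) : ν G ≤ l.liminf fun i ↦ μ i G := by
  refine (le_liminf_iff).mpr fun r hr ↦ ?_
  obtain ⟨T, T_subset, union_subset, hT⟩ := exists_finset_lt_measure_biUnion hG hr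
  have limit : Tendsto (fun i ↦ μ i (⋃ s ∈ T, s)) l (𝓝 (ν (⋃ s ∈ T, s))) :=
    (ENNReal.tendsto_toReal_iff (fun _ ↦ measure_ne_top _ _) (measure_ne_top _ _)).mp
      (hS.tendsto_measureReal_biUnion T_subset hmeas hlim)
  filter_upwards [limit.eventually (lt_mem_nhds hT)] with i hi
  exact hi.trans_le (measure_mono union_subset)

end OpenSets

/-- The rectangles of pairs `(y, u)` whose `renewalPair` probability is computed by counting. -/
def renewalRectangles : Set (Set (ℝ × ℝ)) :=
  {A | ∃ a b l r : ℝ, 1 ≤ a ∧ a < b ∧ 0 < l ∧ l < r ∧ b * r ≤ 1 ∧ Ioo a b ×ˢ Ioo l r = A}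

lemma isPiSystem_renewalRectangles : IsPiSystem renewalRectangles := by
  rintro _ ⟨a, b, l, r, ha, -, hl, -, hbr, rfl⟩ _ ⟨a', b', l', r', -, -, -, -, -, rfl⟩ nonempty
  rw [prod_inter_prod, Ioo_inter_Ioo, Ioo_inter_Ioo] at nonempty ⊢
  obtain ⟨⟨y, u⟩, hy, hu⟩ := nonempty
  have hy' := hy.1.trans hy.2
  have hu' := hu.1.trans hu.2
  refine ⟨_, _, _, _, le_sup_of_le_left ha, hy', lt_sup_of_lt_left hl, hu', ?_, rfl⟩
  have r_nonneg : 0 ≤ r ⊓ r' := ((lt_sup_of_lt_left hl).trans hu').le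
  have b_nonneg : 0 ≤ b := by linarith [(le_sup_left : a ≤ a ⊔ a'), (inf_le_left : b ⊓ b' ≤ b)]
  exact (mul_le_mul inf_le_left inf_le_left r_nonneg b_nonneg).trans hbr

lemma measurableSet_of_mem_renewalRectangles {A : Set (ℝ × ℝ)} (hA : A ∈ renewalRectangles) :
    MeasurableSet A := by
  obtain ⟨a, b, l, r, -, -, -, -, -, rfl⟩ := hA
  exact measurableSet_Ioo.prod measurableSet_Ioo

lemma isOpen_renewalDomain : IsOpen renewalDomain := by
  have eq : renewalDomain = {p | 1 < p.1 ∧ 0 < p.2 ∧ p.1 * p.2 < 1} := by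
    ext ⟨y, u⟩
    refine and_congr_right fun hy ↦ and_congr_right fun _ ↦ ?_
    exact lt_div_iff₀' (one_pos.trans hy)
  rw [eq]
  exact (isOpen_lt continuous_const continuous_fst).inter
    ((isOpen_lt continuous_const continuous_snd).inter
      (isOpen_lt (continuous_fst.mul continuous_snd) continuous_const))

lemma exists_renewalRectangles_subset {G : Set (ℝ × ℝ)} (hG : IsOpen G) {p : ℝ × ℝ}
    (hp : p ∈ G ∩ renewalDomain) : 
    ∃ A ∈ renewalRectangles, A ∈ 𝓝 p ∧ A ⊆ G ∩ renewalDomain := by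
  obtain ⟨s, hs, t, ht, subset⟩ :=
    mem_nhds_prod_iff.mp ((hG.inter isOpen_renewalDomain).mem_nhds hp)
  obtain ⟨a₀, b₀, hy₀, hs₀⟩ := mem_nhds_iff_exists_Ioo_subset.mp hs
  obtain ⟨l₀, r₀, hu₀, ht₀⟩ := mem_nhds_iff_exists_Ioo_subset.mp ht
  obtain ⟨a, haa₀, hay⟩ := exists_between hy₀.1
  obtain ⟨b, hyb, hbb₀⟩ := exists_between hy₀.2
  obtain ⟨l, hll₀, hlu⟩ := exists_between hu₀.1
  obtain ⟨r, hur, hrr₀⟩ := exists_between hu₀.2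
  have subset₀ := (prod_mono hs₀ ht₀).trans subset
  have corner_al : (a, l) ∈ renewalDomain :=
    (subset₀ ⟨⟨haa₀, hay.trans hy₀.2⟩, hll₀, hlu.trans hu₀.2⟩).2
  have corner_br : (b, r) ∈ renewalDomain :=
    (subset₀ ⟨⟨hy₀.1.trans hyb, hbb₀⟩, hu₀.1.trans hur, hrr₀⟩).2
  refine ⟨Ioo a b ×ˢ Ioo l r, ⟨a, b, l, r, corner_al.1.le, hay.trans hyb, corner_al.2.1,
    hlu.trans hur, ?_, rfl⟩, prod_mem_nhds (Ioo_mem_nhds hay hyb) (Ioo_mem_nhds hlu hur), ?_⟩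
  · exact ((lt_div_iff₀' (one_pos.trans corner_br.1)).mp corner_br.2.2).le
  · exact (prod_mono (Ioo_subset_Ioo haa₀.le hbb₀.le) (Ioo_subset_Ioo hll₀.le hrr₀.le)).trans
      subset₀

lemma tendsto_gaussMeasure_renewalPair_preimage_of_frontier {A : Set (ℝ × ℝ)}
    (hA : MeasurableSet A) (frontier_null : renewalLimit (frontier A) = 0) :
    Tendsto (fun R ↦ gaussMeasure (renewalPair R ⁻¹' A)) atTop (𝓝 (renewalLimit A)) := by
  have (R : ℝ) : IsProbabilityMeasure (gaussMeasure.map (renewalPair R)) :=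
    Measure.isProbabilityMeasure_map (measurable_renewalPair R).aemeasurable
  have limit := tendsto_measure_of_null_frontier (L := atTop)
    (μs := fun R ↦ gaussMeasure.map (renewalPair R)) (fun G hG ↦ ?_) frontier_null
  · exact limit.congr fun R ↦ Measure.map_apply (measurable_renewalPair R) hA
  rw [← measure_inter_conull renewalLimit_compl_renewalDomain]
  refine (le_liminf_measure_of_tendsto_measureReal (l := atTop)
    (μ := fun R ↦ gaussMeasure.map (renewalPair R)) isPiSystem_renewalRectangles
    (fun _ ↦ measurableSet_of_mem_renewalRectangles) ?_
    fun p hp ↦ exists_renewalRectangles_subset hG hp).trans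
      (liminf_le_liminf (.of_forall fun R ↦ measure_mono inter_subset_left))
  intro A hA
  have hA_meas := measurableSet_of_mem_renewalRectangles hA
  obtain ⟨a, b, l, r, ha, hab, hl, hlr, hbr, rfl⟩ := hA
  rw [renewalLimit_prod ha hab.le hl.le hlr.le hbr]
  exact (tendsto_gaussMeasure_renewalPair_preimage ha hab hl hlr hbr).congr fun R ↦
    (map_measureReal_apply (measurable_renewalPair R) hA_meas).symm

/-! ### Reversed continued fractions -/

section Reversal

variable {b : ℕ → ℕ}

lemma qden_div_qden_mem_Ico (hb : ∀ n, 0 < b n) (m : ℕ) :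
    (qden b (m + 1) / qden b (m + 2) : ℝ) ∈ Ico (0 : ℝ) 1 := by
  refine ⟨by positivity, (div_lt_one ?_).mpr ?_⟩ <;> norm_cast
  exacts [qden_pos hb _, qden_lt_qden hb m]

lemma qden_div_qden_succ (hb : ∀ n, 0 < b n) (m : ℕ) :
    (qden b (m + 1) / qden b (m + 2) : ℝ) = 1 / (b (m + 2) + qden b m / qden b (m + 1)) := by
  have pos : (0 : ℝ) < qden b (m + 1) := by exact_mod_cast qden_pos hb _
  rw [qden_add_two]
  push_cast
  field_simp

lemma iterate_gaussMap_qden_div_qden (hb : ∀ n, 0 < b n) (m k : ℕ) :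
    gaussMap^[k] (qden b (m + k + 1) / qden b (m + k + 2)) = qden b (m + 1) / qden b (m + 2) := by
  induction k with
  | zero => rfl
  | succ k ih =>
    rw [Function.iterate_succ_apply, ← ih, ← add_assoc, qden_div_qden_succ hb,
      gaussMap_one_div_add _ (qden_div_qden_mem_Ico hb _)]

lemma pq_qden_div_qden (hb : ∀ n, 0 < b n) {n k : ℕ} (hk : k + 3 ≤ n) :
    pq (qden b (n - 1) / qden b n) (k + 1) = b (n - k) := by
  obtain ⟨m, rfl⟩ := Nat.exists_eq_add_of_le' hk
  rw [show m + (k + 3) - 1 = m + 1 + k + 1 by lia, show m + (k + 3) = m + 1 + k + 2 by lia,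
    show m + 1 + k + 2 - k = m + 1 + 2 by lia, ← pq_iterate_gaussMap,
    iterate_gaussMap_qden_div_qden hb, qden_div_qden_succ hb,
    pq_one_div_add _ (qden_div_qden_mem_Ico hb m)]

end Reversal

/-- Reads off the first `N` partial quotients of the second coordinate. At a renewal pair these are
the last partial quotients before the renewal, in reversed order. -/
noncomputable def renewalDigits (N : ℕ) (p : ℝ × ℝ) : ℝ × (Fin N → ℕ) :=
  (p.1, fun k ↦ pq p.2 (k + 1))

lemma measurable_renewalDigits (N : ℕ) : Measurable (renewalDigits N) :=
  measurable_fst.prodMk (measurable_pi_iff.mpr fun k ↦ (measurable_pq (k + 1)).comp measurable_snd)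

lemma renewalDigits_renewalPair {α R : ℝ} {N : ℕ} (hα : α ∈ unitIrrationals)
    (hR : qden (pq α) (N + 1) ≤ R) :
    renewalDigits N (renewalPair R α) =
      (qden (pq α) (nIndex α R) / R, fun k : Fin N ↦ pq α (nIndex α R - k)) := by
  have lt_nIndex : N + 1 < nIndex α R := by
    by_contra! h
    have : (qden (pq α) (nIndex α R) : ℝ) ≤ qden (pq α) (N + 1) := by
      exact_mod_cast qden_mono (pq_pos hα) h
    linarith [lt_qden_nIndex hα R]
  exact Prod.ext rfl (funext fun k ↦ pq_qden_div_qden (pq_pos hα) (by lia))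

/-! ### Continuity of the partial quotients -/

section Continuity

variable {α : ℝ}

lemma continuousAt_gaussMap (hα : Irrational α) : ContinuousAt gaussMap α := by
  have inv_irrational : Irrational (1 / α) := by simpa using hα.inv
  exact (continuousAt_fract (inv_irrational.ne_int _)).comp
    (continuousAt_const.div continuousAt_id hα.ne_zero)

lemma continuousAt_iterate_gaussMap (hα : Irrational α) (n : ℕ) :
    ContinuousAt gaussMap^[n] α := by
  induction n generalizing α with
  | zero => exact continuousAt_id
  | succ n ih =>
    rw [Function.iterate_succ]
    exact (ih (irrational_gaussMap hα)).comp (continuousAt_gaussMap hα)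

lemma irrational_iterate_gaussMap (hα : Irrational α) (n : ℕ) : Irrational (gaussMap^[n] α) := by
  induction n generalizing α with
  | zero => exact hα
  | succ _ ih => exact ih (irrational_gaussMap hα)

lemma continuousAt_natFloor {x : ℝ} (hx : x ≠ ⌊x⌋) : ContinuousAt (fun y : ℝ ↦ ⌊y⌋₊) x := by
  have lt : (⌊x⌋ : ℝ) < x := (Int.floor_le x).lt_of_ne' hx
  have floor_eq : ∀ᶠ y in 𝓝 x, ⌊y⌋ = ⌊x⌋ := by
    filter_upwards [Ioo_mem_nhds lt (Int.lt_floor_add_one x)] with y hy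
    exact Int.floor_eq_iff.mpr ⟨hy.1.le, hy.2⟩
  refine tendsto_const_nhds.congr' (floor_eq.mono fun y hy ↦ ?_)
  simp only [← Int.floor_toNat, hy]

lemma continuousAt_pq (hα : Irrational α) (n : ℕ) : ContinuousAt (fun x ↦ pq x n) α := by
  have irrational := irrational_iterate_gaussMap hα (n - 1)
  have inv_irrational : Irrational (1 / gaussMap^[n - 1] α) := by simpa using irrational.inv
  exact (continuousAt_natFloor (inv_irrational.ne_int _)).comp_of_eq
    (continuousAt_const.div (continuousAt_iterate_gaussMap hα (n - 1)) irrational.ne_zero) rfl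

lemma continuousAt_renewalDigits (N : ℕ) {p : ℝ × ℝ} (hp : Irrational p.2) :
    ContinuousAt (renewalDigits N) p :=
  continuousAt_fst.prodMk (continuousAt_pi.mpr fun k ↦
    (continuousAt_pq hp (k + 1)).comp continuousAt_snd)

end Continuity

lemma mem_frontier_of_mem_frontier_preimage {X Y : Type*} [TopologicalSpace X]
    [TopologicalSpace Y] {f : X → Y} {x : X} {s : Set Y} (hf : ContinuousAt f x)
    (hx : x ∈ frontier (f ⁻¹' s)) : f x ∈ frontier s := by
  rw [frontier_eq_closure_inter_closure] at hx ⊢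
  exact ⟨closure_mono (image_preimage_subset f s) (mem_closure_image hf hx.1),
    closure_mono (image_preimage_subset f sᶜ) (mem_closure_image hf hx.2)⟩

lemma ae_irrational_snd : ∀ᵐ p : ℝ × ℝ, Irrational p.2 := by
  rw [Measure.volume_eq_prod]
  exact Measure.quasiMeasurePreserving_snd.ae (ae_irrational .rfl)

lemma volume_frontier_preimage_renewalDigits {N : ℕ} {s : Set ℝ} (hs : volume (frontier s) = 0)
    (t : Set (Fin N → ℕ)) : volume (frontier (renewalDigits N ⁻¹' s ×ˢ t)) = 0 := by
  rw [← measure_inter_conull ae_irrational_snd]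
  have null : volume (frontier s ×ˢ (univ : Set ℝ)) = 0 := by
    rw [Measure.volume_eq_prod, Measure.prod_prod, hs, zero_mul]
  refine measure_mono_null ?_ null
  rintro p ⟨frontier_p, irrational_p⟩
  have := mem_frontier_of_mem_frontier_preimage (continuousAt_renewalDigits N irrational_p)
    frontier_p
  rw [frontier_prod_eq, (isClopen_discrete t).frontier_eq, prod_empty, empty_union] at this
  exact ⟨this.1, trivial⟩

/-! ### The limit law -/

lemma tendsto_gaussMeasure_lt_qden (n : ℕ) :
    Tendsto (fun R : ℝ ↦ gaussMeasure {α | R < qden (pq α) n}) atTop (𝓝 0) := by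
  have iInter_eq : ⋂ R : ℝ, {α | R < (qden (pq α) n : ℝ)} = ∅ :=
    eq_empty_of_forall_notMem fun α hα ↦
      absurd (mem_iInter.mp hα (qden (pq α) n)) (lt_irrefl (qden (pq α) n : ℝ))
  rw [← measure_empty (μ := gaussMeasure), ← iInter_eq]
  refine tendsto_measure_iInter_atTop (fun R ↦ ?_) (fun R R' le α hα ↦ lt_of_le_of_lt le hα)
    ⟨0, measure_ne_top _ _⟩
  exact (measurableSet_lt measurable_const
    (measurable_from_nat.comp (measurable_qden n))).nullMeasurableSet

lemma tendsto_measure_of_ae_eq_off {Ω ι : Type*} [MeasurableSpace Ω] {μ : Measure Ω}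
    {l : Filter ι} {s t u : ι → Set Ω} {c : ENNReal} (hc : c ≠ ⊤)
    (hs : Tendsto (fun i ↦ μ (s i)) l (𝓝 c)) (hu : Tendsto (fun i ↦ μ (u i)) l (𝓝 0))
    (hst : ∀ i, ∀ᵐ x ∂μ, x ∉ u i → (x ∈ s i ↔ x ∈ t i)) :
    Tendsto (fun i ↦ μ (t i)) l (𝓝 c) := by
  have le_add {v w : Set Ω} {i : ι} (h : ∀ᵐ x ∂μ, x ∉ u i → x ∈ v → x ∈ w) :
      μ v ≤ μ w + μ (u i) := by
    refine (measure_mono_ae ?_).trans (measure_union_le _ _)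
    filter_upwards [h] with x hx hv
    by_cases hxu : x ∈ u i
    exacts [Or.inr hxu, Or.inl (hx hxu hv)]
  have lower := ENNReal.Tendsto.sub hs hu (Or.inl hc)
  have upper := hs.add hu
  rw [tsub_zero] at lower
  rw [add_zero] at upper
  refine tendsto_of_tendsto_of_tendsto_of_le_of_le lower upper (fun i ↦ ?_) fun i ↦ ?_
  · exact tsub_le_iff_right.mpr (le_add ((hst i).mono fun x hx hxu ↦ (hx hxu).mp))
  · exact le_add ((hst i).mono fun x hx hxu ↦ (hx hxu).mpr)

/-- The limiting joint law of `q_n / R` and of the last `N` partial quotients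
`a_n, a_{n-1}, …, a_{n-N+1}`, where `q_n` is the first denominator exceeding `R`. -/
noncomputable def renewalLaw (N : ℕ) : Measure (ℝ × (Fin N → ℕ)) :=
  renewalLimit.map (renewalDigits N)

instance isProbabilityMeasure_renewalLaw (N : ℕ) : IsProbabilityMeasure (renewalLaw N) :=
  Measure.isProbabilityMeasure_map (measurable_renewalDigits N).aemeasurable

lemma ae_renewalLaw_one_lt_and_pos (N : ℕ) : ∀ᵐ x ∂renewalLaw N, 1 < x.1 ∧ ∀ k, 0 < x.2 k := by
  refine (ae_map_iff (measurable_renewalDigits N).aemeasurable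
    (measurableSet_Ioi.prod (to_countable {c : Fin N → ℕ | ∀ k, 0 < c k}).measurableSet)).mpr ?_
  filter_upwards [compl_mem_ae_iff.mpr renewalLimit_compl_renewalDomain,
    renewalLimit_absolutelyContinuous.ae_le ae_irrational_snd] with p mem_domain irrational_p
  obtain ⟨h₁, pos, lt⟩ := not_notMem.mp mem_domain
  have lt_one : p.2 < 1 := lt.trans ((div_lt_one (one_pos.trans h₁)).mpr h₁)
  exact ⟨h₁, fun k ↦ pq_pos ⟨⟨pos, lt_one⟩, irrational_p⟩ _⟩

lemma tendsto_gaussMeasure_renewalLaw {N : ℕ} {s : Set ℝ} (hs : MeasurableSet s)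
    (frontier_null : volume (frontier s) = 0) (t : Set (Fin N → ℕ)) :
    Tendsto (fun R : ℝ ↦ gaussMeasure {α | (qden (pq α) (nIndex α R) / R : ℝ) ∈ s ∧
      (fun k : Fin N ↦ pq α (nIndex α R - k)) ∈ t}) atTop (𝓝 (renewalLaw N (s ×ˢ t))) := by
  have ht := (to_countable t).measurableSet
  rw [renewalLaw, Measure.map_apply (measurable_renewalDigits N) (hs.prod ht)]
  refine tendsto_measure_of_ae_eq_off (measure_ne_top _ _)
    (tendsto_gaussMeasure_renewalPair_preimage_of_frontier
      (measurable_renewalDigits N (hs.prod ht))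
      (renewalLimit_absolutelyContinuous (volume_frontier_preimage_renewalDigits frontier_null t)))
    (tendsto_gaussMeasure_lt_qden (N + 1)) fun R ↦ ?_
  filter_upwards [ae_mem_unitIrrationals] with α hα hR
  rw [mem_preimage, mem_preimage, renewalDigits_renewalPair hα (not_lt.mp hR)]
  rfl

/-- For every `N ≥ 0` there is a probability measure `P_N` on
`(1,∞) × ℕ₊^N` such that for all `1 < a < b` and positive integers `c₀, …, c_{N−1}`, the
Gauss measure of `{α ∈ (0,1) irrational : a < q_{n_R}(α)/R < b, a_{n_R−k}(α) = c_k, 0 ≤ k < N}`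
tends to `P_N ((a,b) × {(c₀,…,c_{N−1})})` as `R → ∞`. -/
theorem statement0 (N : ℕ) :
    ∃ P : Measure (ℝ × (Fin N → ℕ)), IsProbabilityMeasure P ∧
      P {x : ℝ × (Fin N → ℕ) | ¬ (1 < x.1 ∧ ∀ k, 0 < x.2 k)} = 0 ∧
      ∀ a b : ℝ, 1 < a → a < b → ∀ c : Fin N → ℕ, (∀ k, 0 < c k) →
        Filter.Tendsto
          (fun R : ℝ =>
            gaussMeasure {α : ℝ | α ∈ Ioo (0 : ℝ) 1 ∧ Irrational α ∧
              a < (qden (pq α) (nIndex α R) : ℝ) / R ∧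
              (qden (pq α) (nIndex α R) : ℝ) / R < b ∧
              ∀ k : Fin N, pq α (nIndex α R - (k : ℕ)) = c k})
          Filter.atTop (nhds (P (Ioo a b ×ˢ ({c} : Set (Fin N → ℕ))))) := by
  refine ⟨renewalLaw N, inferInstance, ae_renewalLaw_one_lt_and_pos N, fun a b _ _ c _ ↦ ?_⟩
  have frontier_null : volume (frontier (Ioo a b)) = 0 := (convex_Ioo a b).addHaar_frontier volume
  refine (tendsto_gaussMeasure_renewalLaw measurableSet_Ioo frontier_null {c}).congr fun R ↦
    measure_congr ?_
  filter_upwards [ae_mem_unitIrrationals] with α hα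
  exact propext ⟨fun ⟨h₁, h₂⟩ ↦ ⟨hα.1, hα.2, h₁.1, h₁.2, congrFun h₂⟩,
    fun ⟨_, _, h₁, h₂, h₃⟩ ↦ ⟨⟨h₁, h₂⟩, funext h₃⟩⟩
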